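/- arXiv:1603.01960 — 4 statements merged into one kernel-verified Lean document; each statement's English description precedes it below -/
import Mathlib

section
/- Let s ∈ (0,1/2), let Ω ⊂ ℝ^n be a bounded domain and let W be the double well potential. Then for every k ∈ ℕ there exists a constant c_k > 0 such that for every ε ∈ (0,1) and every f ∈ S_ε^k one has F_ε(f) = ∫_Ω∫_Ω |f(x)−f(y)|²/|x−y|^{n+2s} dx dy + ε^{−2s} ∫_Ω W(f) dx ≤ c_k; in particular the bound c_k is independent of ε. -/
open MeasureTheory Real Set
open scoped ENNReal

noncomputable section

/-- The double well potential: an even nonnegative `C²` function vanishing exactly at `±1`,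
positive on `(-1,1)`, with nondegenerate minima at `±1`. -/
def IsDoubleWell (W : ℝ → ℝ) : Prop :=
  ContDiff ℝ 2 W ∧ (∀ t, W (-t) = W t) ∧ (∀ t, 0 ≤ W t) ∧
  W 1 = 0 ∧ W (-1) = 0 ∧ (∀ t ∈ Set.Ioo (-1 : ℝ) 1, 0 < W t) ∧
  deriv W 1 = 0 ∧ deriv W (-1) = 0 ∧
  0 < iteratedDeriv 2 W 1 ∧ 0 < iteratedDeriv 2 W (-1)

/-- The Gagliardo double integral `∫_Ω ∫_Ω |u(x)-u(y)|² / |x-y|^{n+2s} dx dy`. -/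
def gagliardo (n : ℕ) (s : ℝ) (Ω : Set (EuclideanSpace ℝ (Fin n)))
    (u : EuclideanSpace ℝ (Fin n) → ℝ) : ℝ≥0∞ :=
  ∫⁻ x in Ω, ∫⁻ y in Ω, ENNReal.ofReal (|u x - u y| ^ 2 / dist x y ^ ((n : ℝ) + 2 * s))

/-- The potential term `∫_Ω W(u) dx`. -/
def potentialTerm (n : ℕ) (Ω : Set (EuclideanSpace ℝ (Fin n))) (W : ℝ → ℝ)
    (u : EuclideanSpace ℝ (Fin n) → ℝ) : ℝ≥0∞ :=
  ∫⁻ x in Ω, ENNReal.ofReal (W (u x))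

/-- The cosine polynomial `φ_λ(t) = ∑_{m=0}^k λ⁽ᵐ⁾ cos(m t)`. -/
def cosPoly (k : ℕ) (lam : EuclideanSpace ℝ (Fin (k + 1))) (t : ℝ) : ℝ :=
  ∑ m : Fin (k + 1), lam m * Real.cos ((m : ℕ) * t)

/-- The averaged sign `L_ε(φ_λ)(t) = (1/(2ε)) ∫_{t-ε}^{t+ε} φ_λ(τ)/|φ_λ(τ)| dτ`. -/
def Lavg (k : ℕ) (ε : ℝ) (lam : EuclideanSpace ℝ (Fin (k + 1))) (t : ℝ) : ℝ :=
  (1 / (2 * ε)) * ∫ τ in (t - ε)..(t + ε), cosPoly k lam τ / |cosPoly k lam τ|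

/-- The family `S_ε^k = { L_ε(φ_λ) ∘ P₁ : |λ| = 1 }` of functions on `ℝ^n`. -/
def Sset (n k : ℕ) (hn : 0 < n) (ε : ℝ) : Set (EuclideanSpace ℝ (Fin n) → ℝ) :=
  {f | ∃ lam : EuclideanSpace ℝ (Fin (k + 1)), ‖lam‖ = 1 ∧
    ∀ x, f x = Lavg k ε lam (x ⟨0, hn⟩)}

/-! The sign of a cosine polynomial of order `k` has at most `N = N(k, Ω)` jumps on a bounded
interval, so its increments there are dominated by those of a monotone function `c` bounded by
`4 N`. Averaging over intervals of length `2ε` preserves this domination, and the average of `c` is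
again monotone with the same bound, whatever `ε` is. For a bounded monotone function the `L¹` norm
of an increment by `h` is `O(|h|)`, which removes one power from the Gagliardo kernel and leaves
`‖h‖ ^ (1 - n - 2s)`, integrable near the origin precisely because `s < 1/2`. The potential vanishes
at distance more than `ε` from the zeros, so its integral is `O(ε)`, and `ε ^ (1 - 2s) ≤ 1`. -/

section CosinePolynomials

theorem eq_of_cos_eq_of_floor_div_pi_eq {t u : ℝ} (hcos : cos t = cos u)
    (hfloor : ⌊t / π⌋ = ⌊u / π⌋) : t = u := by
  have sub_floor_mem (v : ℝ) : v - ⌊v / π⌋ * π ∈ Icc 0 π := by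
    have hle := (le_div_iff₀ pi_pos).1 (Int.floor_le (v / π))
    have hlt := (div_lt_iff₀ pi_pos).1 (Int.lt_floor_add_one (v / π))
    constructor <;> linarith
  have ht := sub_floor_mem t
  rw [hfloor] at ht
  have := injOn_cos ht (sub_floor_mem u) (by rw [cos_sub_int_mul_pi, cos_sub_int_mul_pi, hcos])
  linarith

theorem encard_zeros_eval_cos_le {p : Polynomial ℝ} (hp : p ≠ 0) (a b : ℝ) :
    {t ∈ Icc a b | p.eval (cos t) = 0}.encard ≤
      (p.natDegree * (Finset.Icc ⌊a / π⌋ ⌊b / π⌋).card : ℕ) := by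
  calc {t ∈ Icc a b | p.eval (cos t) = 0}.encard
      ≤ ((p.roots.toFinset ×ˢ Finset.Icc ⌊a / π⌋ ⌊b / π⌋ : Finset (ℝ × ℤ)) :
          Set (ℝ × ℤ)).encard := by
        refine encard_le_encard_of_injOn (f := fun t => (cos t, ⌊t / π⌋)) ?_ ?_
        · rintro t ⟨⟨hat, htb⟩, ht⟩
          have := pi_pos
          simp only [Finset.coe_product, mem_prod, Finset.mem_coe, Multiset.mem_toFinset,
            Polynomial.mem_roots hp, Finset.mem_Icc]
          exact ⟨ht, by gcongr, by gcongr⟩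
        · intro t _ u _ htu
          exact eq_of_cos_eq_of_floor_div_pi_eq (congrArg Prod.fst htu) (congrArg Prod.snd htu)
    _ ≤ (p.natDegree * (Finset.Icc ⌊a / π⌋ ⌊b / π⌋).card : ℕ) := by
        rw [encard_coe_eq_coe_finsetCard, Finset.card_product]
        gcongr
        exact (Multiset.toFinset_card_le _).trans p.card_roots'

theorem exists_polynomial_eval_cos_eq_cosPoly {k : ℕ} {lam : EuclideanSpace ℝ (Fin (k + 1))}
    (hlam : lam ≠ 0) :
    ∃ p : Polynomial ℝ, p ≠ 0 ∧ p.natDegree ≤ k ∧ ∀ t, p.eval (cos t) = cosPoly k lam t := by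
  let chebyshev : Polynomial.Sequence ℝ :=
    { elems' := fun m => Polynomial.Chebyshev.T ℝ m
      degree_eq' := fun m => by simp [Polynomial.Chebyshev.degree_T] }
  have hli : LinearIndependent ℝ fun m : Fin (k + 1) => Polynomial.Chebyshev.T ℝ (m : ℕ) :=
    chebyshev.linearIndependent.comp _ Fin.val_injective
  refine ⟨∑ m : Fin (k + 1), lam m • Polynomial.Chebyshev.T ℝ (m : ℕ), ?_, ?_, fun t => ?_⟩
  · intro h
    apply hlam
    ext m
    exact Fintype.linearIndependent_iff.1 hli lam h m
  · refine Polynomial.natDegree_sum_le_of_forall_le _ _ fun m _ => ?_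
    refine (Polynomial.natDegree_smul_le _ _).trans ?_
    rw [Polynomial.Chebyshev.natDegree_T, Int.natAbs_natCast]
    omega
  · simp [Polynomial.eval_finsetSum, Polynomial.Chebyshev.T_real_cos, cosPoly]

theorem encard_zeros_cosPoly_le {k : ℕ} {lam : EuclideanSpace ℝ (Fin (k + 1))} (hlam : lam ≠ 0)
    (a b : ℝ) :
    {t ∈ Icc a b | cosPoly k lam t = 0}.encard ≤ (k * (Finset.Icc ⌊a / π⌋ ⌊b / π⌋).card : ℕ) := by
  obtain ⟨p, hp, hpk, hpφ⟩ := exists_polynomial_eval_cos_eq_cosPoly hlam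
  simp only [← hpφ]
  exact (encard_zeros_eval_cos_le hp a b).trans (by gcongr)

theorem exists_finset_card_le_zeros_cosPoly_mem {k : ℕ} {lam : EuclideanSpace ℝ (Fin (k + 1))}
    (hlam : lam ≠ 0) (a b : ℝ) :
    ∃ Z : Finset ℝ, Z.card ≤ k * (Finset.Icc ⌊a / π⌋ ⌊b / π⌋).card ∧
      ∀ z ∈ Icc a b, cosPoly k lam z = 0 → z ∈ Z := by
  have hcard := encard_zeros_cosPoly_le hlam a b
  have hfin : {t ∈ Icc a b | cosPoly k lam t = 0}.Finite := finite_of_encard_le_coe hcard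
  refine ⟨hfin.toFinset, ?_, fun z hz hφz => hfin.mem_toFinset.2 ⟨hz, hφz⟩⟩
  rwa [hfin.encard_eq_coe_toFinset_card, Nat.cast_le] at hcard

theorem continuous_cosPoly (k : ℕ) (lam : EuclideanSpace ℝ (Fin (k + 1))) :
    Continuous (cosPoly k lam) := by
  unfold cosPoly
  fun_prop

end CosinePolynomials

section SignJumps

theorem eqOn_div_abs_one_or_neg_one {X : Type*} [TopologicalSpace X] {φ : X → ℝ} {S : Set X}
    (hS : IsPreconnected S) (hφ : ContinuousOn φ S) (hφ0 : ∀ z ∈ S, φ z ≠ 0) :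
    EqOn (fun z => φ z / |φ z|) 1 S ∨ EqOn (fun z => φ z / |φ z|) (-1) S := by
  refine hS.eq_one_or_eq_neg_one_of_sq_eq
    (hφ.div hφ.abs fun z hz => abs_ne_zero.2 (hφ0 z hz)) fun z hz => ?_
  simp [div_pow, hφ0 z hz]

theorem abs_div_abs_self_le_one (a : ℝ) : |(a / |a|)| ≤ 1 := by
  rw [abs_div, abs_abs]
  exact div_self_le_one _

/-- A monotone function whose increments dominate those of the sign of any continuous function
vanishing only at points of `Z`. Each `z ∈ Z` carries a jump at `z` from the left and another one
from the right, since the sign takes a third value, `0`, at its zeros. -/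
def jumpMajorant (Z : Finset ℝ) (t : ℝ) : ℝ :=
  2 * ({z ∈ Z | z < t}.card + {z ∈ Z | z ≤ t}.card)

theorem monotone_jumpMajorant (Z : Finset ℝ) : Monotone (jumpMajorant Z) := by
  intro t u htu
  unfold jumpMajorant
  gcongr

theorem abs_jumpMajorant_le (Z : Finset ℝ) (t : ℝ) : |jumpMajorant Z t| ≤ 4 * Z.card := by
  have hlt : ({z ∈ Z | z < t}.card : ℝ) ≤ Z.card := by gcongr; exact Finset.filter_subset _ _
  have hle : ({z ∈ Z | z ≤ t}.card : ℝ) ≤ Z.card := by gcongr; exact Finset.filter_subset _ _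
  rw [jumpMajorant, abs_of_nonneg (by positivity)]
  linarith

theorem two_le_jumpMajorant_sub {Z : Finset ℝ} {t u z : ℝ} (htu : t < u) (hzZ : z ∈ Z)
    (hz : z ∈ Icc t u) : 2 ≤ jumpMajorant Z u - jumpMajorant Z t := by
  have card_add_one_le {P Q : ℝ → Prop} [DecidablePred P] [DecidablePred Q]
      (hPQ : ∀ y, P y → Q y) (hP : ¬P z) (hQ : Q z) :
      ({y ∈ Z | P y}.card : ℝ) + 1 ≤ {y ∈ Z | Q y}.card := by
    have hss : {y ∈ Z | P y} ⊂ {y ∈ Z | Q y} :=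
      Finset.ssubset_iff_of_subset (Finset.monotone_filter_right Z fun y _ => hPQ y) |>.2
        ⟨z, by simp [hzZ, hQ], by simp [hP]⟩
    exact_mod_cast Finset.card_lt_card hss
  unfold jumpMajorant
  rcases hz.2.lt_or_eq with hzu | rfl
  · have hlt := card_add_one_le (P := (· < t)) (Q := (· < u)) (fun y hy => hy.trans htu)
      hz.1.not_gt hzu
    have hle : ({y ∈ Z | y ≤ t}.card : ℝ) ≤ {y ∈ Z | y ≤ u}.card := by gcongr
    linarith
  · have hle := card_add_one_le (P := (· ≤ t)) (Q := (· ≤ z)) (fun y hy => hy.trans hz.1)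
      htu.not_ge le_rfl
    have hlt : ({y ∈ Z | y < t}.card : ℝ) ≤ {y ∈ Z | y < z}.card := by gcongr
    linarith

theorem abs_div_abs_sub_le_jumpMajorant {φ : ℝ → ℝ} {Z : Finset ℝ} {t u : ℝ}
    (hφ : ContinuousOn φ (Icc t u)) (hZ : ∀ z ∈ Icc t u, φ z = 0 → z ∈ Z) (htu : t ≤ u) :
    |(φ u / |φ u| - φ t / |φ t|)| ≤ jumpMajorant Z u - jumpMajorant Z t := by
  rcases htu.eq_or_lt with rfl | htu'
  · simp
  by_cases hφ0 : ∀ z ∈ Icc t u, φ z ≠ 0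
  · have hconst : φ u / |φ u| = φ t / |φ t| := by
      rcases eqOn_div_abs_one_or_neg_one isPreconnected_Icc hφ hφ0 with h | h <;>
        exact (h (right_mem_Icc.2 htu)).trans (h (left_mem_Icc.2 htu)).symm
    simpa [hconst] using monotone_jumpMajorant Z htu
  · push Not at hφ0
    obtain ⟨z, hz, hφz⟩ := hφ0
    calc |(φ u / |φ u| - φ t / |φ t|)| ≤ |(φ u / |φ u|)| + |(φ t / |φ t|)| := abs_sub _ _
      _ ≤ 1 + 1 := add_le_add (abs_div_abs_self_le_one _) (abs_div_abs_self_le_one _)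
      _ = 2 := one_add_one_eq_two
      _ ≤ _ := two_le_jumpMajorant_sub htu' (hZ z hz hφz) hz

theorem intervalIntegrable_div_abs_self {φ : ℝ → ℝ} (hφ : Measurable φ) (a b : ℝ) :
    IntervalIntegrable (fun τ => φ τ / |φ τ|) volume a b :=
  (intervalIntegrable_const (c := (1 : ℝ))).mono_fun
    (hφ.div hφ.abs).aestronglyMeasurable (.of_forall fun τ => by simpa using div_self_le_one |φ τ|)

end SignJumps

section SteklovMean

/-- The Steklov mean of `f` at scale `ε`: its average over the interval of radius `ε` around the
given point. With `f = φ / |φ|` this is the operator `L_ε` of the paper. -/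
def steklovMean (ε : ℝ) (f : ℝ → ℝ) (t : ℝ) : ℝ :=
  (1 / (2 * ε)) * ∫ τ in (t - ε)..(t + ε), f τ

variable {ε : ℝ} {f c : ℝ → ℝ}

theorem steklovMean_eq_integral_add (ε : ℝ) (f : ℝ → ℝ) (t : ℝ) :
    steklovMean ε f t = (1 / (2 * ε)) * ∫ τ in (-ε)..ε, f (t + τ) := by
  rw [steklovMean, intervalIntegral.integral_comp_add_left, sub_eq_add_neg]

theorem steklovMean_eq_of_eqOn_const (hε : 0 < ε) {t a : ℝ}
    (hf : ∀ τ ∈ Icc (t - ε) (t + ε), f τ = a) : steklovMean ε f t = a := by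
  have hIcc : uIcc (t - ε) (t + ε) = Icc (t - ε) (t + ε) := uIcc_of_le (by linarith)
  rw [steklovMean, intervalIntegral.integral_congr (g := fun _ => a) (by rwa [hIcc]),
    intervalIntegral.integral_const, smul_eq_mul]
  field_simp
  ring

theorem abs_steklovMean_le (hε : 0 < ε) {K : ℝ} (hf : ∀ τ, |f τ| ≤ K) (t : ℝ) :
    |steklovMean ε f t| ≤ K := by
  have hint : |∫ τ in (t - ε)..(t + ε), f τ| ≤ K * (2 * ε) := by
    have h := intervalIntegral.norm_integral_le_of_norm_le_const (f := f) (a := t - ε) (b := t + ε)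
      fun τ _ => hf τ
    rwa [norm_eq_abs, show t + ε - (t - ε) = 2 * ε by ring,
      abs_of_pos (by positivity : 0 < 2 * ε)] at h
  rw [steklovMean, abs_mul, abs_of_pos (by positivity : 0 < 1 / (2 * ε)), one_div,
    inv_mul_le_iff₀ (by positivity), mul_comm (2 * ε)]
  exact hint

theorem abs_steklovMean_sub_le (hε : 0 < ε) {t u : ℝ}
    (hf : ∀ a b, IntervalIntegrable f volume a b) (hc : ∀ a b, IntervalIntegrable c volume a b)
    (hfc : ∀ τ ∈ Icc (-ε) ε, |f (u + τ) - f (t + τ)| ≤ c (u + τ) - c (t + τ)) :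
    |steklovMean ε f u - steklovMean ε f t| ≤ steklovMean ε c u - steklovMean ε c t := by
  have integrable_shift {g : ℝ → ℝ} (hg : ∀ a b, IntervalIntegrable g volume a b) (v : ℝ) :
      IntervalIntegrable (fun τ => g (v + τ)) volume (-ε) ε := by
    simpa using (hg (-ε + v) (ε + v)).comp_add_left v
  have sub_eq {g : ℝ → ℝ} (hg : ∀ a b, IntervalIntegrable g volume a b) :
      steklovMean ε g u - steklovMean ε g t
        = 1 / (2 * ε) * ∫ τ in (-ε)..ε, (g (u + τ) - g (t + τ)) := by
    rw [steklovMean_eq_integral_add, steklovMean_eq_integral_add, ← mul_sub,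
      intervalIntegral.integral_sub (integrable_shift hg u) (integrable_shift hg t)]
  rw [sub_eq hf, sub_eq hc, abs_mul, abs_of_pos (by positivity : 0 < 1 / (2 * ε))]
  gcongr
  exact intervalIntegral.norm_integral_le_of_norm_le (by linarith)
    (.of_forall fun τ hτ => (norm_eq_abs _).trans_le (hfc τ (Ioc_subset_Icc_self hτ)))
    ((integrable_shift hc u).sub (integrable_shift hc t))

theorem monotone_steklovMean (hε : 0 < ε) (hc : Monotone c) : Monotone (steklovMean ε c) := by
  intro t u htu
  have hci (a b : ℝ) : IntervalIntegrable c volume a b := hc.intervalIntegrable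
  refine sub_nonneg.1 ((abs_nonneg _).trans (abs_steklovMean_sub_le hε hci hci fun τ _ => ?_))
  exact (abs_of_nonneg (sub_nonneg.2 (hc (by gcongr)))).le

end SteklovMean

section Integrals

theorem abs_integral_add_sub_le {c : ℝ → ℝ} {K : ℝ}
    (hc : ∀ a b, IntervalIntegrable c volume a b) (hK : ∀ t, |c t| ≤ K) (a b h : ℝ) :
    |∫ t in a..b, (c (t + h) - c t)| ≤ 2 * K * |h| := by
  have hshift : IntervalIntegrable (fun t => c (t + h)) volume a b := by
    simpa using (hc (a + h) (b + h)).comp_add_right h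
  have integral_shift_le (p : ℝ) : |∫ t in (p + h)..p, c t| ≤ K * |h| := by
    simpa using intervalIntegral.norm_integral_le_of_norm_le_const (f := c) (a := p + h) (b := p)
      fun t _ => hK t
  calc |∫ t in a..b, (c (t + h) - c t)|
      = |(∫ t in (a + h)..a, c t) - ∫ t in (b + h)..b, c t| := by
        rw [intervalIntegral.integral_sub hshift (hc a b),
          intervalIntegral.integral_comp_add_right c h,
          intervalIntegral.integral_interval_sub_interval_comm (hc _ _) (hc _ _) (hc _ _)]
    _ ≤ |∫ t in (a + h)..a, c t| + |∫ t in (b + h)..b, c t| := abs_sub _ _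
    _ ≤ K * |h| + K * |h| := add_le_add (integral_shift_le a) (integral_shift_le b)
    _ = 2 * K * |h| := by ring

theorem lintegral_Icc_abs_add_sub_le {c : ℝ → ℝ} {K : ℝ} (hc : Monotone c) (hK : ∀ t, |c t| ≤ K)
    (a b h : ℝ) :
    ∫⁻ t in Icc a b, ENNReal.ofReal |c (t + h) - c t| ≤ ENNReal.ofReal (2 * K * |h|) := by
  rcases lt_or_ge b a with hba | hab
  · simp [hba]
  have hci (p q : ℝ) : IntervalIntegrable c volume p q := hc.intervalIntegrable
  have hshift : IntervalIntegrable (fun t => c (t + h)) volume a b := by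
    simpa using (hci (a + h) (b + h)).comp_add_right h
  have habs : ∫ t in a..b, |c (t + h) - c t| = |∫ t in a..b, (c (t + h) - c t)| := by
    rcases le_total 0 h with hh | hh
    · have hnn (t : ℝ) : 0 ≤ c (t + h) - c t := sub_nonneg.2 (hc (by linarith))
      rw [abs_of_nonneg (intervalIntegral.integral_nonneg_of_forall hab hnn)]
      simp_rw [abs_of_nonneg (hnn _)]
    · have hnn (t : ℝ) : 0 ≤ c t - c (t + h) := sub_nonneg.2 (hc (by linarith))
      rw [← abs_neg, ← intervalIntegral.integral_neg]
      simp_rw [neg_sub, abs_sub_comm (c (_ + h)), abs_of_nonneg (hnn _)]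
      rw [abs_of_nonneg (intervalIntegral.integral_nonneg_of_forall hab hnn)]
  rw [setLIntegral_congr Ioc_ae_eq_Icc.symm, ← ofReal_integral_eq_lintegral_ofReal
    ((intervalIntegrable_iff_integrableOn_Ioc_of_le hab).1 (hshift.sub (hci a b)).abs)
    (.of_forall fun _ => abs_nonneg _), ← intervalIntegral.integral_of_le hab, habs]
  exact ENNReal.ofReal_le_ofReal (abs_integral_add_sub_le hci hK a b h)

theorem apply_mem_Icc_of_mem_ball {ι : Type*} [Fintype ι] {R : ℝ} {x : EuclideanSpace ℝ ι}
    (hx : x ∈ Metric.ball 0 R) (i : ι) : x i ∈ Icc (-R) R :=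
  abs_le.1 ((PiLp.norm_apply_le x i).trans (mem_ball_zero_iff.1 hx).le : |x i| ≤ R)

theorem lintegral_ball_comp_apply_le {n : ℕ} (i : Fin n) {F : ℝ → ℝ≥0∞} (hF : Measurable F)
    (R : ℝ) :
    ∫⁻ x in Metric.ball (0 : EuclideanSpace ℝ (Fin n)) R, F (x i) ≤
      ENNReal.ofReal (2 * R) ^ (n - 1) * ∫⁻ t in Icc (-R) R, F t := by
  let cube : Set (Fin n → ℝ) := univ.pi fun _ => Icc (-R) R
  have ball_subset : Metric.ball 0 R ⊆ (WithLp.ofLp : EuclideanSpace ℝ (Fin n) → _) ⁻¹' cube :=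
    fun x hx j _ => apply_mem_Icc_of_mem_ball hx j
  calc ∫⁻ x in Metric.ball (0 : EuclideanSpace ℝ (Fin n)) R, F (x i)
      ≤ ∫⁻ x in (WithLp.ofLp : EuclideanSpace ℝ (Fin n) → _) ⁻¹' cube, F (x i) :=
        lintegral_mono_set ball_subset
    _ = ∫⁻ x in cube, F (x i) :=
        (PiLp.volume_preserving_ofLp (Fin n)).setLIntegral_comp_preimage_emb
          (MeasurableEquiv.toLp 2 (Fin n → ℝ)).symm.measurableEmbedding (fun x => F (x i)) cube
    _ = ∫⁻ t, F t ∂(volume.restrict cube).map (Function.eval i) :=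
        (lintegral_map hF (measurable_pi_apply i)).symm
    _ = ENNReal.ofReal (2 * R) ^ (n - 1) * ∫⁻ t in Icc (-R) R, F t := by
        rw [volume_pi, Measure.restrict_pi_pi, Measure.pi_map_eval, lintegral_smul_measure]
        simp [Finset.card_erase_of_mem, two_mul]

theorem lintegral_ball_norm_rpow_lt_top {E : Type*} [NormedAddCommGroup E] [NormedSpace ℝ E]
    [FiniteDimensional ℝ E] [MeasurableSpace E] [BorelSpace E] (μ : Measure E)
    [μ.IsAddHaarMeasure] (hd : 0 < Module.finrank ℝ E) {a : ℝ} (ha : -Module.finrank ℝ E < a)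
    (r : ℝ) :
    ∫⁻ x in Metric.ball (0 : E) r, ENNReal.ofReal (‖x‖ ^ a) ∂μ < ∞ := by
  refine (integrableOn_ball_of_norm_le_rpow (C := 1) (α := -a) hd (by linarith)
    (.of_forall fun x => ?_) (measurable_norm.pow_const a).aestronglyMeasurable).lintegral_lt_top
  rw [neg_neg, one_mul, norm_of_nonneg (by positivity)]

theorem lintegral_ball_lintegral_ball_le_add {E : Type*} [NormedAddCommGroup E]
    [MeasurableSpace E] [BorelSpace E] (μ : Measure E) [μ.IsAddLeftInvariant] (F : E → E → ℝ≥0∞)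
    (R : ℝ) :
    ∫⁻ x in Metric.ball 0 R, ∫⁻ y in Metric.ball 0 R, F x y ∂μ ∂μ ≤
      ∫⁻ x in Metric.ball 0 R, ∫⁻ h in Metric.ball 0 (2 * R), F x (x + h) ∂μ ∂μ := by
  refine setLIntegral_mono' measurableSet_ball fun x hx => ?_
  rw [← (measurePreserving_add_left μ x).setLIntegral_comp_preimage_emb
    (MeasurableEquiv.addLeft x).measurableEmbedding]
  refine lintegral_mono_set fun h hxh => ?_
  rw [mem_preimage, mem_ball_zero_iff] at hxh
  rw [mem_ball_zero_iff] at hx ⊢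
  calc ‖h‖ = ‖(x + h) - x‖ := by rw [add_sub_cancel_left]
    _ ≤ ‖x + h‖ + ‖x‖ := norm_sub_le _ _
    _ < 2 * R := by linarith

end Integrals

section Gagliardo

variable {n : ℕ} {s : ℝ}

theorem gagliardo_mono_set {Ω Ω' : Set (EuclideanSpace ℝ (Fin n))} (h : Ω ⊆ Ω')
    (u : EuclideanSpace ℝ (Fin n) → ℝ) : gagliardo n s Ω u ≤ gagliardo n s Ω' u :=
  (lintegral_mono_set h).trans (lintegral_mono fun _ => lintegral_mono_set h)

theorem potentialTerm_mono_set {Ω Ω' : Set (EuclideanSpace ℝ (Fin n))} (h : Ω ⊆ Ω') (W : ℝ → ℝ)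
    (u : EuclideanSpace ℝ (Fin n) → ℝ) : potentialTerm n Ω W u ≤ potentialTerm n Ω' W u :=
  lintegral_mono_set h

theorem gagliardo_le_of_abs_sub_le {Ω : Set (EuclideanSpace ℝ (Fin n))} (hΩ : MeasurableSet Ω)
    {u v : EuclideanSpace ℝ (Fin n) → ℝ} (h : ∀ x ∈ Ω, ∀ y ∈ Ω, |u x - u y| ≤ |v x - v y|) :
    gagliardo n s Ω u ≤ gagliardo n s Ω v :=
  setLIntegral_mono' hΩ fun x hx => setLIntegral_mono' hΩ fun y hy => by
    gcongr ENNReal.ofReal (?_ ^ 2 / _)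
    exact h x hx y hy

variable {c : ℝ → ℝ} {K : ℝ}

theorem ofReal_sq_div_dist_add_rpow_le (hK : ∀ t, |c t| ≤ K) (i : Fin n) (p : ℝ)
    (x h : EuclideanSpace ℝ (Fin n)) :
    ENNReal.ofReal (|c (x i) - c ((x + h) i)| ^ 2 / dist x (x + h) ^ p) ≤
      ENNReal.ofReal (2 * K) *
        (ENNReal.ofReal (‖h‖ ^ (-p)) * ENNReal.ofReal |c (x i + h i) - c (x i)|) := by
  have hK0 : 0 ≤ K := (abs_nonneg _).trans (hK 0)
  rw [← ENNReal.ofReal_mul (by positivity), ← ENNReal.ofReal_mul (by positivity),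
    dist_self_add_right, PiLp.add_apply, div_eq_mul_inv, ← rpow_neg (norm_nonneg h), abs_sub_comm]
  refine ENNReal.ofReal_le_ofReal ?_
  have h2K : |c (x i + h i) - c (x i)| ≤ 2 * K :=
    (abs_sub _ _).trans (by linarith [hK (x i + h i), hK (x i)])
  calc |c (x i + h i) - c (x i)| ^ 2 * ‖h‖ ^ (-p)
      ≤ 2 * K * |c (x i + h i) - c (x i)| * ‖h‖ ^ (-p) := by
        rw [sq]
        gcongr
    _ = 2 * K * (‖h‖ ^ (-p) * |c (x i + h i) - c (x i)|) := by ring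

theorem norm_rpow_neg_mul_abs_apply_le (p : ℝ) (h : EuclideanSpace ℝ (Fin n)) (i : Fin n) :
    ‖h‖ ^ (-p) * |h i| ≤ ‖h‖ ^ (1 - p) := by
  rcases eq_or_ne h 0 with rfl | h0
  · simpa using rpow_nonneg le_rfl (1 - p)
  · rw [show 1 - p = -p + 1 by ring, rpow_add (norm_pos_iff.2 h0), rpow_one]
    gcongr
    exact PiLp.norm_apply_le h i

theorem gagliardo_ball_comp_apply_le (hc : Monotone c) (hK : ∀ t, |c t| ≤ K) (i : Fin n) (R : ℝ) :
    gagliardo n s (Metric.ball 0 R) (fun x => c (x i)) ≤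
      ENNReal.ofReal (2 * K) ^ 2 * ENNReal.ofReal (2 * R) ^ (n - 1) *
        ∫⁻ h in Metric.ball (0 : EuclideanSpace ℝ (Fin n)) (2 * R),
          ENNReal.ofReal (‖h‖ ^ (1 - (n + 2 * s))) := by
  set p : ℝ := n + 2 * s
  have hK0 : 0 ≤ K := (abs_nonneg _).trans (hK 0)
  have hcm : Measurable c := hc.measurable
  calc gagliardo n s (Metric.ball 0 R) (fun x => c (x i))
      ≤ ∫⁻ x in Metric.ball (0 : EuclideanSpace ℝ (Fin n)) R,
          ∫⁻ h in Metric.ball (0 : EuclideanSpace ℝ (Fin n)) (2 * R), ENNReal.ofReal (2 * K) *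
            (ENNReal.ofReal (‖h‖ ^ (-p)) * ENNReal.ofReal |c (x i + h i) - c (x i)|) :=
        (lintegral_ball_lintegral_ball_le_add volume _ R).trans <| lintegral_mono fun x =>
          lintegral_mono fun h => ofReal_sq_div_dist_add_rpow_le hK i p x h
    _ = ENNReal.ofReal (2 * K) * ∫⁻ h in Metric.ball (0 : EuclideanSpace ℝ (Fin n)) (2 * R),
          ENNReal.ofReal (‖h‖ ^ (-p)) *
            ∫⁻ x in Metric.ball (0 : EuclideanSpace ℝ (Fin n)) R,
              ENNReal.ofReal |c (x i + h i) - c (x i)| := by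
        rw [lintegral_lintegral_swap (by fun_prop), ← lintegral_const_mul' _ _ (by finiteness)]
        refine lintegral_congr fun h => ?_
        rw [lintegral_const_mul' _ _ (by finiteness), lintegral_const_mul' _ _ (by finiteness)]
    _ ≤ ENNReal.ofReal (2 * K) * ∫⁻ h in Metric.ball (0 : EuclideanSpace ℝ (Fin n)) (2 * R),
          ENNReal.ofReal (‖h‖ ^ (-p)) *
            (ENNReal.ofReal (2 * R) ^ (n - 1) * ENNReal.ofReal (2 * K * |h i|)) := by
        gcongr with h
        exact (lintegral_ball_comp_apply_le i (F := fun t => ENNReal.ofReal |c (t + h i) - c t|)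
          (by fun_prop) R).trans (by gcongr; exact lintegral_Icc_abs_add_sub_le hc hK _ _ _)
    _ = ENNReal.ofReal (2 * K) ^ 2 * ENNReal.ofReal (2 * R) ^ (n - 1) *
          ∫⁻ h in Metric.ball (0 : EuclideanSpace ℝ (Fin n)) (2 * R),
            ENNReal.ofReal (‖h‖ ^ (-p) * |h i|) := by
        rw [← lintegral_const_mul' _ _ (by finiteness), ← lintegral_const_mul' _ _ (by finiteness)]
        refine lintegral_congr fun h => ?_
        rw [ENNReal.ofReal_mul (p := 2 * K) (by positivity),
          ENNReal.ofReal_mul (p := ‖h‖ ^ (-p)) (by positivity)]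
        ring
    _ ≤ _ := by
        gcongr with h
        exact norm_rpow_neg_mul_abs_apply_le p h i

end Gagliardo

section AveragedSign

variable {n : ℕ} {φ : ℝ → ℝ} {Z : Finset ℝ} {R ε : ℝ}

theorem abs_steklovMean_div_abs_sub_le (hφ : Continuous φ)
    (hZ : ∀ z ∈ Icc (-(R + 1)) (R + 1), φ z = 0 → z ∈ Z) (hε : ε ∈ Ioo 0 1) {t u : ℝ}
    (ht : t ∈ Icc (-R) R) (hu : u ∈ Icc (-R) R) :
    |steklovMean ε (fun τ => φ τ / |φ τ|) t - steklovMean ε (fun τ => φ τ / |φ τ|) u| ≤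
      |steklovMean ε (jumpMajorant Z) t - steklovMean ε (jumpMajorant Z) u| := by
  wlog htu : t ≤ u generalizing t u
  · simpa only [abs_sub_comm] using this hu ht (le_of_not_ge htu)
  rw [abs_sub_comm, abs_sub_comm (steklovMean ε (jumpMajorant Z) t)]
  refine (abs_steklovMean_sub_le hε.1 (intervalIntegrable_div_abs_self hφ.measurable)
    (fun _ _ => (monotone_jumpMajorant Z).intervalIntegrable) fun τ hτ => ?_).trans (le_abs_self _)
  exact abs_div_abs_sub_le_jumpMajorant hφ.continuousOn
    (fun z hz => hZ z ⟨by linarith [hz.1, hτ.1, ht.1, hε.2], by linarith [hz.2, hτ.2, hu.2, hε.2]⟩)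
    (by gcongr)

theorem gagliardo_steklovMean_div_abs_le {s : ℝ} (hφ : Continuous φ)
    (hZ : ∀ z ∈ Icc (-(R + 1)) (R + 1), φ z = 0 → z ∈ Z) (hε : ε ∈ Ioo 0 1) (i : Fin n) :
    gagliardo n s (Metric.ball 0 R) (fun x => steklovMean ε (fun τ => φ τ / |φ τ|) (x i)) ≤
      ENNReal.ofReal (2 * (4 * Z.card)) ^ 2 * ENNReal.ofReal (2 * R) ^ (n - 1) *
        ∫⁻ h in Metric.ball (0 : EuclideanSpace ℝ (Fin n)) (2 * R),
          ENNReal.ofReal (‖h‖ ^ (1 - (n + 2 * s))) := by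
  calc gagliardo n s (Metric.ball 0 R) (fun x => steklovMean ε (fun τ => φ τ / |φ τ|) (x i))
      ≤ gagliardo n s (Metric.ball 0 R) (fun x => steklovMean ε (jumpMajorant Z) (x i)) :=
        gagliardo_le_of_abs_sub_le measurableSet_ball fun x hx y hy =>
          abs_steklovMean_div_abs_sub_le hφ hZ hε (apply_mem_Icc_of_mem_ball hx i)
            (apply_mem_Icc_of_mem_ball hy i)
    _ ≤ _ := gagliardo_ball_comp_apply_le (monotone_steklovMean hε.1 (monotone_jumpMajorant Z))
        (abs_steklovMean_le hε.1 (abs_jumpMajorant_le Z)) i R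

theorem steklovMean_div_abs_eq_one_or_neg_one (hφ : Continuous φ) (hε : 0 < ε) {t : ℝ}
    (hφ0 : ∀ z ∈ Icc (t - ε) (t + ε), φ z ≠ 0) :
    steklovMean ε (fun τ => φ τ / |φ τ|) t = 1 ∨ steklovMean ε (fun τ => φ τ / |φ τ|) t = -1 :=
  (eqOn_div_abs_one_or_neg_one isPreconnected_Icc hφ.continuousOn hφ0).imp
    (steklovMean_eq_of_eqOn_const hε) (steklovMean_eq_of_eqOn_const hε)

variable {W : ℝ → ℝ} {M : ℝ}

theorem ofReal_comp_steklovMean_div_abs_le (hφ : Continuous φ)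
    (hZ : ∀ z ∈ Icc (-(R + 1)) (R + 1), φ z = 0 → z ∈ Z) (hε : ε ∈ Ioo 0 1)
    (hW1 : W 1 = 0) (hW_neg_one : W (-1) = 0) (hWM : ∀ t ∈ Icc (-1) 1, W t ≤ M) {t : ℝ}
    (ht : t ∈ Icc (-R) R) :
    ENNReal.ofReal (W (steklovMean ε (fun τ => φ τ / |φ τ|) t)) ≤
      (⋃ z ∈ Z, Icc (z - ε) (z + ε)).indicator (fun _ => ENNReal.ofReal M) t := by
  by_cases hφ0 : ∀ z ∈ Icc (t - ε) (t + ε), φ z ≠ 0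
  · rcases steklovMean_div_abs_eq_one_or_neg_one hφ hε.1 hφ0 with h | h <;>
      simp [h, hW1, hW_neg_one]
  · push Not at hφ0
    obtain ⟨z, hz, hφz⟩ := hφ0
    have hzZ : z ∈ Z :=
      hZ z ⟨by linarith [hz.1, ht.1, hε.2], by linarith [hz.2, ht.2, hε.2]⟩ hφz
    have htz : t ∈ Icc (z - ε) (z + ε) := ⟨by linarith [hz.2], by linarith [hz.1]⟩
    have htZ : t ∈ ⋃ z ∈ Z, Icc (z - ε) (z + ε) := mem_biUnion hzZ htz
    rw [indicator_of_mem htZ]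
    gcongr
    exact hWM _ (abs_le.1 (abs_steklovMean_le hε.1 (fun τ => abs_div_abs_self_le_one (φ τ)) t))

theorem potentialTerm_steklovMean_div_abs_le (hφ : Continuous φ)
    (hZ : ∀ z ∈ Icc (-(R + 1)) (R + 1), φ z = 0 → z ∈ Z) (hε : ε ∈ Ioo 0 1)
    (hW1 : W 1 = 0) (hW_neg_one : W (-1) = 0) (hWM : ∀ t ∈ Icc (-1) 1, W t ≤ M) (i : Fin n) :
    potentialTerm n (Metric.ball 0 R) W (fun x => steklovMean ε (fun τ => φ τ / |φ τ|) (x i)) ≤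
      ENNReal.ofReal (2 * R) ^ (n - 1) *
        (ENNReal.ofReal M * (Z.card * ENNReal.ofReal (2 * ε))) := by
  set nearZeros : Set ℝ := ⋃ z ∈ Z, Icc (z - ε) (z + ε)
  have hmeas : MeasurableSet nearZeros := Z.measurableSet_biUnion fun _ _ => measurableSet_Icc
  have hvol : volume nearZeros ≤ Z.card * ENNReal.ofReal (2 * ε) := by
    calc volume nearZeros ≤ ∑ z ∈ Z, volume (Icc (z - ε) (z + ε)) :=
          measure_biUnion_finset_le Z _
      _ = Z.card * ENNReal.ofReal (2 * ε) := by
          simp [show ∀ z : ℝ, z + ε - (z - ε) = 2 * ε by intro z; ring]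
  calc potentialTerm n (Metric.ball 0 R) W (fun x => steklovMean ε (fun τ => φ τ / |φ τ|) (x i))
      ≤ ∫⁻ x in Metric.ball (0 : EuclideanSpace ℝ (Fin n)) R,
          nearZeros.indicator (fun _ => ENNReal.ofReal M) (x i) :=
        setLIntegral_mono' measurableSet_ball fun x hx =>
          ofReal_comp_steklovMean_div_abs_le hφ hZ hε hW1 hW_neg_one hWM
            (apply_mem_Icc_of_mem_ball hx i)
    _ ≤ ENNReal.ofReal (2 * R) ^ (n - 1) *
          ∫⁻ t in Icc (-R) R, nearZeros.indicator (fun _ => ENNReal.ofReal M) t :=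
        lintegral_ball_comp_apply_le i (measurable_const.indicator hmeas) R
    _ ≤ ENNReal.ofReal (2 * R) ^ (n - 1) * (ENNReal.ofReal M * volume nearZeros) := by
        gcongr
        exact (setLIntegral_le_lintegral _ _).trans_eq (lintegral_indicator_const hmeas _)
    _ ≤ _ := by gcongr

theorem ofReal_rpow_neg_mul_ofReal_two_mul_le_two {s : ℝ} (hs : s ≤ 1 / 2) (hε : ε ∈ Ioo 0 1) :
    ENNReal.ofReal (ε ^ (-(2 * s))) * ENNReal.ofReal (2 * ε) ≤ 2 := by
  have hpow : ε ^ (-(2 * s)) * ε ≤ 1 := by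
    rw [← rpow_add_one hε.1.ne']
    exact rpow_le_one hε.1.le hε.2.le (by linarith)
  rw [← ENNReal.ofReal_mul (rpow_nonneg hε.1.le _), ← ENNReal.ofReal_ofNat]
  exact ENNReal.ofReal_le_ofReal (by linarith)

theorem energy_steklovMean_div_abs_le {s : ℝ} (hs : s ≤ 1 / 2) (hφ : Continuous φ)
    (hZ : ∀ z ∈ Icc (-(R + 1)) (R + 1), φ z = 0 → z ∈ Z) (hε : ε ∈ Ioo 0 1)
    (hW1 : W 1 = 0) (hW_neg_one : W (-1) = 0) (hWM : ∀ t ∈ Icc (-1) 1, W t ≤ M) (i : Fin n) :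
    gagliardo n s (Metric.ball 0 R) (fun x => steklovMean ε (fun τ => φ τ / |φ τ|) (x i)) +
        ENNReal.ofReal (ε ^ (-(2 * s))) * potentialTerm n (Metric.ball 0 R) W
          (fun x => steklovMean ε (fun τ => φ τ / |φ τ|) (x i)) ≤
      ENNReal.ofReal (2 * R) ^ (n - 1) * (ENNReal.ofReal (2 * (4 * Z.card)) ^ 2 *
        (∫⁻ h in Metric.ball (0 : EuclideanSpace ℝ (Fin n)) (2 * R),
          ENNReal.ofReal (‖h‖ ^ (1 - (n + 2 * s)))) + 2 * ENNReal.ofReal M * Z.card) := by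
  set I := ∫⁻ h in Metric.ball (0 : EuclideanSpace ℝ (Fin n)) (2 * R),
    ENNReal.ofReal (‖h‖ ^ (1 - (n + 2 * s)))
  set V := ENNReal.ofReal (2 * R) ^ (n - 1)
  calc _ ≤ ENNReal.ofReal (2 * (4 * Z.card)) ^ 2 * V * I + ENNReal.ofReal (ε ^ (-(2 * s))) *
        (V * (ENNReal.ofReal M * (Z.card * ENNReal.ofReal (2 * ε)))) := by
        gcongr
        · exact gagliardo_steklovMean_div_abs_le hφ hZ hε i
        · exact potentialTerm_steklovMean_div_abs_le hφ hZ hε hW1 hW_neg_one hWM i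
    _ = V * (ENNReal.ofReal (2 * (4 * Z.card)) ^ 2 * I + ENNReal.ofReal (ε ^ (-(2 * s))) *
          ENNReal.ofReal (2 * ε) * ENNReal.ofReal M * Z.card) := by
        ring
    _ ≤ _ := by
        gcongr
        exact ofReal_rpow_neg_mul_ofReal_two_mul_le_two hs hε

end AveragedSign

theorem IsDoubleWell.exists_mapsTo {W : ℝ → ℝ} (hW : IsDoubleWell W) :
    ∃ M, MapsTo W (Icc (-1) 1) (Icc 0 M) := by
  obtain ⟨M, hM⟩ := (isCompact_Icc (a := (-1 : ℝ)) (b := 1)).bddAbove_image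
    hW.1.continuous.continuousOn
  exact ⟨M, fun t ht => ⟨hW.2.2.1 t, hM ⟨t, ht, rfl⟩⟩⟩

theorem energy_bound_on_Sset_small_s_general {n : ℕ} (hn : 0 < n) {s : ℝ} (hs : s < 1 / 2)
    {Ω : Set (EuclideanSpace ℝ (Fin n))} (hΩ : Bornology.IsBounded Ω) {W : ℝ → ℝ} {M : ℝ}
    (hWM : MapsTo W (Icc (-1) 1) (Icc 0 M)) (hW1 : W 1 = 0) (hW_neg_one : W (-1) = 0) (k : ℕ) :
    ∃ c : ℝ, 0 < c ∧ ∀ ε ∈ Ioo (0 : ℝ) 1, ∀ f ∈ Sset n k hn ε,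
      gagliardo n s Ω f + ENNReal.ofReal (ε ^ (-(2 * s))) * potentialTerm n Ω W f
        ≤ ENNReal.ofReal c := by
  obtain ⟨R, hΩR⟩ := hΩ.subset_ball 0
  let N : ℕ := k * (Finset.Icc ⌊-(R + 1) / π⌋ ⌊(R + 1) / π⌋).card
  let C : ℝ≥0∞ := ENNReal.ofReal (2 * R) ^ (n - 1) * (ENNReal.ofReal (2 * (4 * N)) ^ 2 *
    (∫⁻ h in Metric.ball (0 : EuclideanSpace ℝ (Fin n)) (2 * R),
      ENNReal.ofReal (‖h‖ ^ (1 - (n + 2 * s)))) + 2 * ENNReal.ofReal M * N)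
  have hC : C ≠ ∞ := by
    have hI := lintegral_ball_norm_rpow_lt_top (E := EuclideanSpace ℝ (Fin n)) volume
      (a := 1 - (n + 2 * s)) (by simpa using hn) (by simp; linarith) (2 * R)
    finiteness
  refine ⟨C.toReal + 1, by positivity, ?_⟩
  rintro ε hε f ⟨lam, hlam, hf⟩
  obtain rfl := funext hf
  obtain ⟨Z, hZN, hZ⟩ := exists_finset_card_le_zeros_cosPoly_mem (lam := lam)
    (by rintro rfl; simp at hlam) (-(R + 1)) (R + 1)
  calc _ ≤ _ := add_le_add (gagliardo_mono_set hΩR _)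
        (mul_le_mul_right (potentialTerm_mono_set hΩR W _) _)
    _ ≤ _ := energy_steklovMean_div_abs_le hs.le (continuous_cosPoly k lam) hZ hε hW1 hW_neg_one
        (fun t ht => (hWM ht).2) ⟨0, hn⟩
    _ ≤ C := by
        unfold C
        gcongr
    _ ≤ ENNReal.ofReal (C.toReal + 1) :=
        (ENNReal.le_ofReal_iff_toReal_le hC (by positivity)).2 (by linarith)

/-- for `s ∈ (0,1/2)`, a bound on `F_ε` over `S_ε^k`, uniform in `ε ∈ (0,1)`. -/
theorem energy_bound_on_Sset_small_s {n : ℕ} (hn : 0 < n) (s : ℝ)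
    (hs : s ∈ Set.Ioo (0 : ℝ) (1 / 2))
    (Ω : Set (EuclideanSpace ℝ (Fin n))) (hΩo : IsOpen Ω) (hΩb : Bornology.IsBounded Ω)
    (W : ℝ → ℝ) (hW : IsDoubleWell W) (k : ℕ) :
    ∃ c : ℝ, 0 < c ∧ ∀ ε ∈ Set.Ioo (0 : ℝ) 1, ∀ f ∈ Sset n k hn ε,
      gagliardo n s Ω f + ENNReal.ofReal (ε ^ (-(2 * s))) * potentialTerm n Ω W f
        ≤ ENNReal.ofReal c := by
  obtain ⟨M, hWM⟩ := hW.exists_mapsTo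
  exact energy_bound_on_Sset_small_s_general hn hs.2 hΩb hWM hW.2.2.2.1 hW.2.2.2.2.1 k
end
end

section
/- Let Ω ⊂ ℝ^n be a nonempty bounded domain and k ∈ ℕ. Then: (b) for every ε > 0 the set S_ε^k is symmetric, i.e. S_ε^k = −S_ε^k; and (c) there exists ε̄_k > 0 such that for every ε ∈ (0, ε̄_k), 0 ∉ S_ε^k, i.e. no function L_ε(φ_λ) ∘ P₁ with |λ| = 1 vanishes almost everywhere on Ω. -/
open MeasureTheory Real Set
open scoped ENNReal

noncomputable section

/-!
Since `φ_λ(t) = p(cos t)` for a nonzero polynomial `p` of degree at most `k`, and `cos` is injective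
on `[jπ, (j+1)π]`, that interval contains at most `k` zeros of `φ_λ`. Where `L_ε(φ_λ)` vanishes,
`φ_λ` cannot have constant sign on `(t-ε, t+ε)`, so `t` lies within `ε` of one of these zeros or of
an endpoint. Hence the zero set of `L_ε(φ_λ)` in `[jπ, (j+1)π]` has measure at most `2(k+2)ε`,
uniformly in `λ`, which for small `ε` is too little to carry the mass of a fixed measure that is
absolutely continuous with respect to Lebesgue measure, such as the image of the volume of `Ω`
under a coordinate.
-/

/-- The algebraic polynomial `p` with `p(cos t) = φ_λ(t)`, written in the Chebyshev basis; it turns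
the zeros of `φ_λ` into roots of a polynomial of degree at most `k`. -/
def chebyshevSum (k : ℕ) (lam : EuclideanSpace ℝ (Fin (k + 1))) : Polynomial ℝ :=
  ∑ m : Fin (k + 1), lam m • Polynomial.Chebyshev.T ℝ ((m : ℕ) : ℤ)

theorem eval_cos_chebyshevSum (k : ℕ) (lam : EuclideanSpace ℝ (Fin (k + 1))) (t : ℝ) :
    (chebyshevSum k lam).eval (cos t) = cosPoly k lam t := by
  simp [chebyshevSum, cosPoly, Polynomial.eval_finsetSum, Polynomial.Chebyshev.T_real_cos]

theorem natDegree_chebyshevSum_le (k : ℕ) (lam : EuclideanSpace ℝ (Fin (k + 1))) :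
    (chebyshevSum k lam).natDegree ≤ k := by
  refine Polynomial.natDegree_sum_le_of_forall_le _ _ fun m _ ↦ ?_
  refine (Polynomial.natDegree_smul_le _ _).trans ?_
  rw [Polynomial.Chebyshev.natDegree_T, Int.natAbs_natCast]
  exact m.is_le

theorem chebyshevSum_ne_zero {k : ℕ} {lam : EuclideanSpace ℝ (Fin (k + 1))} (hlam : lam ≠ 0) :
    chebyshevSum k lam ≠ 0 := by
  intro hsum
  have hindep := (Polynomial.Chebyshev.chebyshevTsequence ℝ).linearIndependent.comp
    (fun m : Fin (k + 1) ↦ (m : ℕ)) Fin.val_injective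
  exact hlam (PiLp.ext (Fintype.linearIndependent_iff.mp hindep _ hsum))

theorem injOn_cos_Icc_int_mul_pi (j : ℤ) : InjOn cos (Icc (j * π) ((j + 1) * π)) := by
  have hshift : ∀ x ∈ Icc (j * π) ((j + 1) * π), x - j * π ∈ Icc 0 π :=
    fun x hx ↦ ⟨by linarith [hx.1], by linarith [hx.2]⟩
  intro x hx y hy hxy
  refine sub_left_injective (injOn_cos (hshift x hx) (hshift y hy) ?_)
  rw [cos_sub_int_mul_pi, cos_sub_int_mul_pi, hxy]

theorem encard_cosPoly_zeros_le {k : ℕ} {lam : EuclideanSpace ℝ (Fin (k + 1))} (hlam : lam ≠ 0)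
    (j : ℤ) : {t ∈ Icc (j * π) ((j + 1) * π) | cosPoly k lam t = 0}.encard ≤ k := by
  set p := chebyshevSum k lam
  have hmaps : MapsTo cos {t ∈ Icc (j * π) ((j + 1) * π) | cosPoly k lam t = 0}
      (p.roots.toFinset : Set ℝ) := by
    rintro t ⟨-, ht⟩
    rw [Finset.mem_coe, Multiset.mem_toFinset, Polynomial.mem_roots (chebyshevSum_ne_zero hlam)]
    exact (eval_cos_chebyshevSum k lam t).trans ht
  calc _ ≤ (p.roots.toFinset : Set ℝ).encard :=
        encard_le_encard_of_injOn hmaps ((injOn_cos_Icc_int_mul_pi j).mono (sep_subset _ _))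
    _ = p.roots.toFinset.card := encard_coe_eq_coe_finsetCard _
    _ ≤ k := by
        exact_mod_cast (Multiset.toFinset_card_le _).trans
          (p.card_roots'.trans (natDegree_chebyshevSum_le k lam))

theorem integral_div_abs_ne_zero {f : ℝ → ℝ} {a b : ℝ} (hab : a < b)
    (hf : ContinuousOn f (Ioo a b)) (hne : ∀ τ ∈ Ioo a b, f τ ≠ 0) :
    ∫ τ in a..b, f τ / |f τ| ≠ 0 := by
  obtain ⟨s, hs, hsign⟩ : ∃ s : ℝ, s ≠ 0 ∧ EqOn (fun τ ↦ f τ / |f τ|) (fun _ ↦ s) (Ioo a b) := by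
    rcases isPreconnected_Ioo.mapsTo_Ioi_or_Iio hf hne with hpos | hneg
    · refine ⟨1, one_ne_zero, fun τ hτ ↦ ?_⟩
      have hτpos : 0 < f τ := hpos hτ
      simp only [abs_of_pos hτpos, div_self hτpos.ne']
    · refine ⟨-1, neg_ne_zero.mpr one_ne_zero, fun τ hτ ↦ ?_⟩
      have hτneg : f τ < 0 := hneg hτ
      simp only [abs_of_neg hτneg, div_neg, div_self hτneg.ne]
  rw [intervalIntegral.integral_congr_Ioo_of_le hab.le hsign, intervalIntegral.integral_const]
  exact smul_ne_zero (sub_ne_zero.mpr hab.ne') hs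

/- The endpoints are added because the zero of `f` near `t` may lie outside `[a, b]`. -/
theorem integral_div_abs_zeros_subset_thickening {f : ℝ → ℝ} {a b ε : ℝ} (hε : 0 < ε)
    (hf : ContinuousOn f (Icc a b)) :
    {t ∈ Icc a b | ∫ τ in (t - ε)..(t + ε), f τ / |f τ| = 0} ⊆
      Metric.thickening ε (insert a (insert b {t ∈ Icc a b | f t = 0})) := by
  rintro t ⟨⟨hat, htb⟩, hint⟩
  by_contra hfar
  simp only [Metric.mem_thickening_iff, not_exists, not_and, not_lt, forall_mem_insert,
    Real.dist_eq] at hfar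
  obtain ⟨ha, hb, hzero⟩ := hfar
  rw [abs_of_nonneg (by linarith)] at ha
  rw [abs_of_nonpos (by linarith)] at hb
  have hsub : Ioo (t - ε) (t + ε) ⊆ Icc a b :=
    fun τ hτ ↦ ⟨by linarith [hτ.1], by linarith [hτ.2]⟩
  refine integral_div_abs_ne_zero (by linarith) (hf.mono hsub) (fun τ hτ hfτ ↦ ?_) hint
  refine (hzero τ ⟨hsub hτ, hfτ⟩).not_gt (abs_lt.mpr ⟨?_, ?_⟩) <;> linarith [hτ.1, hτ.2]

theorem volume_thickening_le_of_encard_le {s : Set ℝ} {m : ℕ} (hs : s.encard ≤ m) (ε : ℝ) :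
    volume (Metric.thickening ε s) ≤ m * ENNReal.ofReal (2 * ε) := by
  lift s to Finset ℝ using finite_of_encard_le_coe hs
  rw [encard_coe_eq_coe_finsetCard, Nat.cast_le] at hs
  rw [Metric.thickening_eq_biUnion_ball]
  calc volume (⋃ x ∈ (s : Set ℝ), Metric.ball x ε)
      ≤ ∑ x ∈ s, volume (Metric.ball x ε) := measure_biUnion_finset_le s _
    _ = s.card * ENNReal.ofReal (2 * ε) := by
        simp only [Real.volume_ball, Finset.sum_const, nsmul_eq_mul]
    _ ≤ m * ENNReal.ofReal (2 * ε) := by gcongr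

theorem Lavg_eq_zero_iff {k : ℕ} {ε : ℝ} (hε : ε ≠ 0) {lam : EuclideanSpace ℝ (Fin (k + 1))}
    {t : ℝ} :
    Lavg k ε lam t = 0 ↔ ∫ τ in (t - ε)..(t + ε), cosPoly k lam τ / |cosPoly k lam τ| = 0 := by
  simp [Lavg, hε]

theorem volume_Lavg_zeros_le {k : ℕ} {lam : EuclideanSpace ℝ (Fin (k + 1))} (hlam : lam ≠ 0)
    {ε : ℝ} (hε : 0 < ε) (j : ℤ) :
    volume {t ∈ Icc (j * π) ((j + 1) * π) | Lavg k ε lam t = 0} ≤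
      (k + 2 : ℕ) * ENNReal.ofReal (2 * ε) := by
  simp only [Lavg_eq_zero_iff hε.ne']
  refine (measure_mono (integral_div_abs_zeros_subset_thickening hε
    (continuous_cosPoly k lam).continuousOn)).trans (volume_thickening_le_of_encard_le ?_ ε)
  calc _ ≤ {t ∈ Icc (j * π) ((j + 1) * π) | cosPoly k lam t = 0}.encard + 1 + 1 :=
        (encard_insert_le _ _).trans (by gcongr; exact encard_insert_le _ _)
    _ ≤ k + 1 + 1 := by gcongr; exact encard_cosPoly_zeros_le hlam j
    _ = (k + 2 : ℕ) := by push_cast; ring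

theorem exists_pos_forall_measure_lt_of_absolutelyContinuous {α : Type*} {mα : MeasurableSpace α}
    {μ ν : Measure α} [IsFiniteMeasure μ] [SigmaFinite ν] (hμν : μ ≪ ν) {η : ℝ≥0∞} (hη : η ≠ 0) :
    ∃ δ > 0, ∀ s, ν s < δ → μ s < η := by
  obtain ⟨δ, hδ, hlt⟩ :=
    exists_pos_setLIntegral_lt_of_measure_lt (Measure.lintegral_rnDeriv_lt_top μ ν).ne hη
  exact ⟨δ, hδ, fun s hs ↦ Measure.setLIntegral_rnDeriv hμν s ▸ hlt s hs⟩

theorem exists_measure_Icc_int_mul_pi_ne_zero {ν : Measure ℝ} (hν : ν ≠ 0) :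
    ∃ j : ℤ, ν (Icc (j * π) ((j + 1) * π)) ≠ 0 := by
  by_contra! hnull
  have hcover := iUnion_Icc_zsmul pi_pos
  simp only [zsmul_eq_mul, Int.cast_add, Int.cast_one] at hcover
  exact hν (Measure.measure_univ_eq_zero.mp (hcover ▸ measure_iUnion_null hnull))

theorem exists_pos_forall_natCast_mul_ofReal_lt (m : ℕ) {δ : ℝ≥0∞} (hδ : 0 < δ) :
    ∃ εb : ℝ, 0 < εb ∧ ∀ ε ∈ Ioo 0 εb, m * ENNReal.ofReal (2 * ε) < δ := by
  obtain ⟨d, hd, hdδ⟩ := ENNReal.lt_iff_exists_nnreal_btwn.mp hδ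
  have hd' : (0 : ℝ) < d := by exact_mod_cast hd
  refine ⟨d / (2 * (m + 1)), by positivity, fun ε hε ↦ lt_of_le_of_lt ?_ hdδ⟩
  rw [← ENNReal.ofReal_natCast, ← ENNReal.ofReal_mul (Nat.cast_nonneg m),
    ← ENNReal.ofReal_coe_nnreal]
  refine ENNReal.ofReal_le_ofReal ?_
  have hlt := (lt_div_iff₀ (by positivity)).mp hε.2
  nlinarith [hε.1]

theorem exists_forall_not_Lavg_comp_ae_eq_zero {X : Type*} [MeasurableSpace X] {μ : Measure X}
    [SFinite μ] (hμ : μ ≠ 0) {g : X → ℝ} (hg : Measure.QuasiMeasurePreserving g μ volume) (k : ℕ) :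
    ∃ εb : ℝ, 0 < εb ∧ ∀ ε ∈ Ioo 0 εb, ∀ lam : EuclideanSpace ℝ (Fin (k + 1)), lam ≠ 0 →
      ¬ Lavg k ε lam ∘ g =ᵐ[μ] 0 := by
  -- Only null sets matter, so a finite measure with the same null sets may replace `μ`.
  set ν : Measure ℝ := μ.toFinite.map g
  have hν_ac : ν ≪ volume := (hg.mono_left (toFinite_absolutelyContinuous μ)).absolutelyContinuous
  have hν : ν ≠ 0 :=
    (Measure.map_ne_zero_iff hg.measurable.aemeasurable).mpr (mt toFinite_eq_zero_iff.mp hμ)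
  obtain ⟨j, hj⟩ := exists_measure_Icc_int_mul_pi_ne_zero hν
  obtain ⟨δ, hδ, hsmall⟩ := exists_pos_forall_measure_lt_of_absolutelyContinuous hν_ac hj
  obtain ⟨εb, hεb, hεδ⟩ := exists_pos_forall_natCast_mul_ofReal_lt (k + 2) hδ
  refine ⟨εb, hεb, fun ε hε lam hlam hae ↦ ?_⟩
  set I := Icc (j * π) ((j + 1) * π)
  set Z := {t ∈ I | Lavg k ε lam t = 0}
  have hZ : ν Z < ν I := hsmall Z ((volume_Lavg_zeros_le hlam hε.1 j).trans_lt (hεδ ε hε))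
  have hIZ : g ⁻¹' I ≤ᵐ[μ.toFinite] g ⁻¹' Z := by
    filter_upwards [(toFinite_absolutelyContinuous μ).ae_eq hae] with x hx hxI using ⟨hxI, hx⟩
  refine hZ.not_ge ?_
  calc ν I = μ.toFinite (g ⁻¹' I) := Measure.map_apply hg.measurable measurableSet_Icc
    _ ≤ μ.toFinite (g ⁻¹' Z) := measure_mono_ae hIZ
    _ ≤ ν Z := Measure.le_map_apply hg.measurable.aemeasurable Z

theorem quasiMeasurePreserving_euclideanSpace_apply {ι : Type*} [Fintype ι] (i : ι) :
    Measure.QuasiMeasurePreserving (fun x : EuclideanSpace ℝ ι ↦ x i) :=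
  (Measure.quasiMeasurePreserving_eval (fun _ : ι ↦ (volume : Measure ℝ)) i).comp
    (PiLp.volume_preserving_ofLp ι).quasiMeasurePreserving

theorem Lavg_neg (k : ℕ) (ε : ℝ) (lam : EuclideanSpace ℝ (Fin (k + 1))) (t : ℝ) :
    Lavg k ε (-lam) t = -Lavg k ε lam t := by
  simp [Lavg, cosPoly, neg_div]

theorem neg_mem_Sset {n k : ℕ} {hn : 0 < n} {ε : ℝ} {f : EuclideanSpace ℝ (Fin n) → ℝ}
    (hf : f ∈ Sset n k hn ε) : -f ∈ Sset n k hn ε := by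
  obtain ⟨lam, hlam, hfL⟩ := hf
  exact ⟨-lam, by rwa [norm_neg], fun x ↦ by rw [Lavg_neg, Pi.neg_apply, hfL]⟩

theorem mem_Sset_iff_neg_mem {n k : ℕ} {hn : 0 < n} {ε : ℝ} {f : EuclideanSpace ℝ (Fin n) → ℝ} :
    f ∈ Sset n k hn ε ↔ -f ∈ Sset n k hn ε :=
  ⟨neg_mem_Sset, fun hf ↦ neg_neg f ▸ neg_mem_Sset hf⟩

theorem Sset_symmetric_and_avoids_zero_general {n : ℕ} (hn : 0 < n)
    (Ω : Set (EuclideanSpace ℝ (Fin n))) (hΩ : volume Ω ≠ 0) (k : ℕ) :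
    (∀ ε : ℝ, 0 < ε → ∀ f : EuclideanSpace ℝ (Fin n) → ℝ,
      f ∈ Sset n k hn ε ↔ -f ∈ Sset n k hn ε) ∧
    (∃ εb : ℝ, 0 < εb ∧ ∀ ε ∈ Set.Ioo (0 : ℝ) εb, ∀ f ∈ Sset n k hn ε,
      ¬ (f =ᵐ[volume.restrict Ω] (0 : EuclideanSpace ℝ (Fin n) → ℝ))) := by
  refine ⟨fun ε _ f ↦ mem_Sset_iff_neg_mem, ?_⟩
  have hproj : Measure.QuasiMeasurePreserving (fun x : EuclideanSpace ℝ (Fin n) ↦ x ⟨0, hn⟩)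
      (volume.restrict Ω) volume :=
    (quasiMeasurePreserving_euclideanSpace_apply _).mono_left
      Measure.restrict_le_self.absolutelyContinuous
  obtain ⟨εb, hεb, hne⟩ :=
    exists_forall_not_Lavg_comp_ae_eq_zero (mt Measure.restrict_eq_zero.mp hΩ) hproj k
  refine ⟨εb, hεb, ?_⟩
  rintro ε hε f ⟨lam, hlam, hfL⟩
  obtain rfl : f = Lavg k ε lam ∘ fun x ↦ x ⟨0, hn⟩ := funext hfL
  exact hne ε hε lam (norm_ne_zero_iff.mp (hlam ▸ one_ne_zero))

/-- (b) `S_ε^k` is symmetric (`S_ε^k = -S_ε^k`) for every `ε > 0`; and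
(c) there exists `ε̄_k > 0` such that for every `ε ∈ (0, ε̄_k)` no element of `S_ε^k`
vanishes almost everywhere on `Ω`. -/
theorem Sset_symmetric_and_avoids_zero {n : ℕ} (hn : 0 < n)
    (Ω : Set (EuclideanSpace ℝ (Fin n))) (hΩo : IsOpen Ω) (hΩb : Bornology.IsBounded Ω)
    (hΩne : Ω.Nonempty) (k : ℕ) :
    (∀ ε : ℝ, 0 < ε → ∀ f : EuclideanSpace ℝ (Fin n) → ℝ,
      f ∈ Sset n k hn ε ↔ -f ∈ Sset n k hn ε) ∧
    (∃ εb : ℝ, 0 < εb ∧ ∀ ε ∈ Set.Ioo (0 : ℝ) εb, ∀ f ∈ Sset n k hn ε,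
      ¬ (f =ᵐ[volume.restrict Ω] (0 : EuclideanSpace ℝ (Fin n) → ℝ))) := by
  exact Sset_symmetric_and_avoids_zero_general hn Ω (hΩo.measure_pos volume hΩne).ne' k
end
end

section
/- Let s ∈ (0,1) and p ∈ [1,+∞) with sp < n, and let q ∈ [1, p*) where p* = np/(n−sp). Let Ω ⊂ ℝ^n be a bounded open set which is an extension domain for W^{s,p}, i.e. there is C > 0 such that every u ∈ W^{s,p}(Ω) has an extension ũ ∈ W^{s,p}(ℝ^n) with ũ = u on Ω and ‖ũ‖_{W^{s,p}(ℝ^n)} ≤ C ‖u‖_{W^{s,p}(Ω)}. Let 𝓘 be a bounded subset of L^p(Ω) with sup_{f ∈ 𝓘} ∫_Ω∫_Ω |f(x)−f(y)|^p/|x−y|^{n+sp} dx dy < ∞. Then 𝓘 is relatively compact (totally bounded) in L^q(Ω). -/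
open MeasureTheory Real Set
open scoped ENNReal

noncomputable section

/-- The `p`-th power of the `W^{s,p}` norm on a set `A`,
`∫_A |u|^p + ∫_A∫_A |u(x)−u(y)|^p/|x−y|^{n+sp}`, valued in `ℝ≥0∞`. -/
def fracNormPow (n : ℕ) (s p : ℝ) (A : Set (EuclideanSpace ℝ (Fin n)))
    (u : EuclideanSpace ℝ (Fin n) → ℝ) : ℝ≥0∞ :=
  (∫⁻ x in A, ENNReal.ofReal (|u x| ^ p))
    + ∫⁻ x in A, ∫⁻ y in A, ENNReal.ofReal (|u x - u y| ^ p / dist x y ^ ((n : ℝ) + s * p))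

/-- `Ω` is an extension domain for `W^{s,p}`: every `u ∈ W^{s,p}(Ω)` extends to a function
`ũ ∈ W^{s,p}(ℝ^n)` with `‖ũ‖_{W^{s,p}(ℝ^n)} ≤ C ‖u‖_{W^{s,p}(Ω)}`. -/
def IsExtensionDomain (n : ℕ) (s p : ℝ) (Ω : Set (EuclideanSpace ℝ (Fin n))) : Prop :=
  ∃ C : ℝ, 0 < C ∧ ∀ u : EuclideanSpace ℝ (Fin n) → ℝ, Measurable u →
    fracNormPow n s p Ω u < ⊤ →
    ∃ ut : EuclideanSpace ℝ (Fin n) → ℝ, Measurable ut ∧ (∀ x ∈ Ω, ut x = u x) ∧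
      fracNormPow n s p Set.univ ut ^ (1 / p)
        ≤ ENNReal.ofReal C * fracNormPow n s p Ω u ^ (1 / p)

/-! At a Lebesgue point `x` of `u`, the averages of `u` over balls containing `x` of radii
`R / 2^k` telescope to `u x`. By Jensen's inequality each difference of consecutive averages is at
most a constant times the `p`-th root of the integral of the Gagliardo density
`y ↦ ∫ |u(y) - u(z)|^p / |y - z|^(n + sp) dz` over a ball around `x` of radius comparable to
`R / 2^k`. For `q ≥ p` the `L^q` norm of this bound is at most a multiple of
`(R / 2^k)^(s - n/p + n/q)` times the Gagliardo seminorm, with a positive exponent when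
`q < np / (n - sp)`. Hence averages over balls of one small radius, centred at finitely many points,
approximate all functions of a bounded family uniformly in `L^q(Ω)`, and these averages form a
bounded subset of a finite-dimensional space. The case `q < p` follows from Hölder's inequality. -/

section Averages

variable {α F : Type*} [MeasurableSpace α] [NormedAddCommGroup F] [NormedSpace ℝ F]
  {μ ν : Measure α} {f g : α → F} {p : ℝ}

theorem enorm_average_rpow_le [IsFiniteMeasure μ] [NeZero μ] (hp : 1 ≤ p)
    (hf : AEStronglyMeasurable f μ) :
    ‖⨍ x, f x ∂μ‖ₑ ^ p ≤ ⨍⁻ x, ‖f x‖ₑ ^ p ∂μ := by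
  have jensen := eLpNorm'_le_eLpNorm'_of_exponent_le one_pos hp ((μ univ)⁻¹ • μ)
    (hf.smul_measure _)
  simp only [eLpNorm', ENNReal.rpow_one, div_one, one_div] at jensen
  rw [ENNReal.le_rpow_inv_iff (by positivity)] at jensen
  exact (ENNReal.rpow_le_rpow (enorm_integral_le_lintegral_enorm _) (by positivity)).trans jensen

theorem enorm_average_sub_const_rpow_le [CompleteSpace F] [IsFiniteMeasure μ] [NeZero μ]
    (hp : 1 ≤ p) (hf : Integrable f μ) (c : F) :
    ‖⨍ x, f x ∂μ - c‖ₑ ^ p ≤ ⨍⁻ x, ‖f x - c‖ₑ ^ p ∂μ := by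
  have average_sub : ⨍ x, f x ∂μ - c = ⨍ x, (f x - c) ∂μ := by
    rw [average, average, integral_sub hf.to_average (integrable_const c), integral_const]
    simp
  rw [average_sub]
  exact enorm_average_rpow_le hp (hf.aestronglyMeasurable.sub aestronglyMeasurable_const)

theorem enorm_average_sub_average_rpow_le [CompleteSpace F] [IsFiniteMeasure μ] [NeZero μ]
    [IsFiniteMeasure ν] [NeZero ν] (hp : 1 ≤ p) (hf : Integrable f μ) (hg : Integrable g ν) :
    ‖⨍ x, f x ∂μ - ⨍ y, g y ∂ν‖ₑ ^ p ≤ ⨍⁻ x, ⨍⁻ y, ‖f x - g y‖ₑ ^ p ∂ν ∂μ := by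
  refine (enorm_average_sub_const_rpow_le hp hf _).trans
    (laverage_mono_ae (.of_forall fun x => ?_))
  simpa only [enorm_sub_rev] using enorm_average_sub_const_rpow_le hp hg (f x)

end Averages

theorem eLpNorm'_tsum_le {α : Type*} [MeasurableSpace α] {μ : Measure α} {f : ℕ → α → ℝ≥0∞}
    {q : ℝ} (hq : 1 ≤ q) (hf : ∀ k, Measurable (f k)) :
    eLpNorm' (fun x => ∑' k, f k x) q μ ≤ ∑' k, eLpNorm' (f k) q μ := by
  have hq0 : 0 < q := by positivity
  have partial_sum_le (N : ℕ) :
      ∫⁻ x, (∑ k ∈ Finset.range N, f k x) ^ q ∂μ ≤ (∑' k, eLpNorm' (f k) q μ) ^ q := by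
    rw [← ENNReal.rpow_inv_le_iff hq0]
    have minkowski := (eLpNorm'_sum_le (s := Finset.range N)
      (fun k _ => (hf k).aestronglyMeasurable (μ := μ)) hq).trans (ENNReal.sum_le_tsum _)
    simpa [eLpNorm'] using minkowski
  rw [eLpNorm', one_div, ENNReal.rpow_inv_le_iff hq0]
  calc ∫⁻ x, ‖∑' k, f k x‖ₑ ^ q ∂μ
      = ∫⁻ x, ⨆ N, (∑ k ∈ Finset.range N, f k x) ^ q ∂μ := by
        refine lintegral_congr fun x => ?_
        rw [enorm_eq_self, ENNReal.tsum_eq_iSup_nat]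
        exact (ENNReal.orderIsoRpow q hq0).map_iSup _
    _ = ⨆ N, ∫⁻ x, (∑ k ∈ Finset.range N, f k x) ^ q ∂μ := by
        refine lintegral_iSup (fun N => by fun_prop) fun M N hMN x => ?_
        dsimp only
        gcongr
    _ ≤ _ := iSup_le partial_sum_le

theorem eLpNorm'_le_mul_rpow_measure_univ_of_norm_le {α F : Type*} [MeasurableSpace α]
    [NormedAddCommGroup F] {μ : Measure α} {f : α → F} {η : NNReal} {q : ℝ} (hq : 0 < q)
    (hf : ∀ x, ‖f x‖ ≤ η) : eLpNorm' f q μ ≤ η * μ univ ^ (1 / q) := by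
  rw [← enorm_eq_self (η : ℝ≥0∞), ← eLpNorm'_const _ hq]
  refine eLpNorm'_mono_enorm_ae hq.le (.of_forall fun x => ?_)
  rw [enorm_eq_self, enorm_le_coe]
  exact hf x

theorem locallyIntegrable_of_lintegral_enorm_rpow_lt_top {X F : Type*} [TopologicalSpace X]
    [MeasurableSpace X] [NormedAddCommGroup F] {μ : Measure X} [IsLocallyFiniteMeasure μ] {p : ℝ}
    {u : X → F} (hp : 1 ≤ p) (hum : AEStronglyMeasurable u μ) (hu : ∫⁻ x, ‖u x‖ₑ ^ p ∂μ < ⊤) :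
    LocallyIntegrable u μ := by
  have hp0 : 0 < p := by positivity
  refine MemLp.locallyIntegrable (p := ENNReal.ofReal p) ⟨hum, ?_⟩ (by simpa using hp)
  rw [eLpNorm_lt_top_iff_lintegral_rpow_enorm_lt_top (by simpa using hp0) ENNReal.ofReal_ne_top]
  simpa only [ENNReal.toReal_ofReal hp0.le] using hu

theorem setLIntegral_closedBall_eq {E : Type*} [PseudoMetricSpace E] [MeasurableSpace E]
    [OpensMeasurableSpace E] {μ : Measure E} (h : E → ℝ≥0∞) (R : ℝ) (x : E) :
    ∫⁻ y in Metric.closedBall x R, h y ∂μ =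
      ∫⁻ y, {w : E × E | dist w.2 w.1 ≤ R}.indicator (fun w => h w.2) (x, y) ∂μ := by
  rw [← lintegral_indicator Metric.isClosed_closedBall.measurableSet]
  rfl

section ClosedBall

variable {E : Type*} [PseudoMetricSpace E] [SecondCountableTopology E] [MeasurableSpace E]
  [OpensMeasurableSpace E] {μ : Measure E} [SFinite μ] {h : E → ℝ≥0∞}

theorem measurable_indicator_dist_le (hh : Measurable h) (R : ℝ) :
    Measurable ({w : E × E | dist w.2 w.1 ≤ R}.indicator fun w => h w.2) :=
  (hh.comp measurable_snd).indicator (measurableSet_le (by fun_prop) measurable_const)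

theorem measurable_setLIntegral_closedBall (hh : Measurable h) (R : ℝ) :
    Measurable fun x => ∫⁻ y in Metric.closedBall x R, h y ∂μ := by
  simp_rw [setLIntegral_closedBall_eq]
  exact (measurable_indicator_dist_le hh R).lintegral_prod_right'

theorem lintegral_setLIntegral_closedBall (hh : Measurable h) (R : ℝ) :
    ∫⁻ x, ∫⁻ y in Metric.closedBall x R, h y ∂μ ∂μ =
      ∫⁻ y, h y * μ (Metric.closedBall y R) ∂μ := by
  simp_rw [setLIntegral_closedBall_eq]
  rw [lintegral_lintegral_swap (by exact (measurable_indicator_dist_le hh R).aemeasurable)]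
  refine lintegral_congr fun y => ?_
  have slice : (fun x => {w : E × E | dist w.2 w.1 ≤ R}.indicator (fun w => h w.2) (x, y)) =
      (Metric.closedBall y R).indicator fun _ => h y := by
    ext x
    simp [Set.indicator, dist_comm]
  rw [slice, lintegral_indicator_const Metric.isClosed_closedBall.measurableSet]

-- Both the `L^1` and the `L^∞` norm of `x ↦ ∫_{B(x,R)} h` are controlled by the mass of `h`.
theorem lintegral_setLIntegral_closedBall_rpow_le (hh : Measurable h) {t : ℝ} (ht : 1 ≤ t)
    {R : ℝ} {V : ℝ≥0∞} (hV : ∀ x, μ (Metric.closedBall x R) ≤ V) :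
    ∫⁻ x, (∫⁻ y in Metric.closedBall x R, h y ∂μ) ^ t ∂μ ≤ V * (∫⁻ y, h y ∂μ) ^ t := by
  have rpow_eq (a : ℝ≥0∞) : a ^ t = a ^ (t - 1) * a := by
    simpa using ENNReal.rpow_add_of_nonneg (x := a) (t - 1) 1 (by linarith) zero_le_one
  calc ∫⁻ x, (∫⁻ y in Metric.closedBall x R, h y ∂μ) ^ t ∂μ
      ≤ ∫⁻ x, (∫⁻ y, h y ∂μ) ^ (t - 1) * ∫⁻ y in Metric.closedBall x R, h y ∂μ ∂μ := by
        refine lintegral_mono fun x => ?_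
        have : 0 ≤ t - 1 := by linarith
        rw [rpow_eq]
        gcongr
        exact Measure.restrict_le_self
    _ = (∫⁻ y, h y ∂μ) ^ (t - 1) * ∫⁻ y, h y * μ (Metric.closedBall y R) ∂μ := by
        rw [lintegral_const_mul _ (measurable_setLIntegral_closedBall hh R),
          lintegral_setLIntegral_closedBall hh]
    _ ≤ (∫⁻ y, h y ∂μ) ^ (t - 1) * ∫⁻ y, h y * V ∂μ := by
        gcongr
        exact hV _
    _ = V * (∫⁻ y, h y ∂μ) ^ t := by
        rw [lintegral_mul_const _ hh, rpow_eq (∫⁻ y, h y ∂μ)]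
        ring

end ClosedBall

section Gagliardo

variable {X F : Type*} [PseudoEMetricSpace X] [MeasurableSpace X] [NormedAddCommGroup F]
  {μ : Measure X} {σ p : ℝ} {u : X → F}

/-- The inner integral `∫ |u(x) - u(y)|^p / |x - y|^σ dy` of the Gagliardo seminorm, whose
`W^{s,p}(ℝ^n)` version has `σ = n + sp`. On the diagonal the integrand is `0 / 0 = 0`. -/
def gagliardoDensity (μ : Measure X) (σ p : ℝ) (u : X → F) (x : X) : ℝ≥0∞ :=
  ∫⁻ y, ‖u x - u y‖ₑ ^ p / edist x y ^ σ ∂μ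

theorem measurable_gagliardoDensity [SecondCountableTopology X] [OpensMeasurableSpace X]
    [SFinite μ] (hu : StronglyMeasurable u) : Measurable (gagliardoDensity μ σ p u) := by
  have numerator : Measurable fun w : X × X => ‖u w.1 - u w.2‖ₑ :=
    ((hu.comp_measurable measurable_fst).sub (hu.comp_measurable measurable_snd)).enorm
  exact ((numerator.pow_const p).div (measurable_edist.pow_const σ)).lintegral_prod_right'

theorem lintegral_enorm_sub_rpow_le_gagliardoDensity (hσ : 0 ≤ σ) {B : Set X}
    (hB : MeasurableSet B) {δ : ℝ≥0∞} (hδ0 : δ ≠ 0) (hδ : δ ≠ ⊤) {x : X}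
    (hxB : ∀ y ∈ B, edist x y ≤ δ) :
    ∫⁻ y in B, ‖u x - u y‖ₑ ^ p ∂μ ≤ δ ^ σ * gagliardoDensity μ σ p u x := by
  have hδσ0 : δ ^ σ ≠ 0 := by simp [hδ0, hδ]
  have hδσ : δ ^ σ ≠ ⊤ := ENNReal.rpow_ne_top_of_nonneg hσ hδ
  rw [gagliardoDensity, ← lintegral_const_mul' _ _ hδσ]
  refine (setLIntegral_mono' hB fun y hy => ?_).trans (setLIntegral_le_lintegral B _)
  calc ‖u x - u y‖ₑ ^ p = δ ^ σ * (‖u x - u y‖ₑ ^ p / δ ^ σ) :=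
        (ENNReal.mul_div_cancel hδσ0 hδσ).symm
    _ ≤ δ ^ σ * (‖u x - u y‖ₑ ^ p / edist x y ^ σ) := by
        gcongr
        exact hxB y hy

theorem enorm_setAverage_sub_setAverage_rpow_le [NormedSpace ℝ F] [CompleteSpace F]
    (hp : 1 ≤ p) (hσ : 0 ≤ σ) {A B : Set X} (hA : MeasurableSet A) (hB : MeasurableSet B)
    (hμA0 : μ A ≠ 0) (hμA : μ A ≠ ⊤) (hμB0 : μ B ≠ 0) (hμB : μ B ≠ ⊤)
    (huA : IntegrableOn u A μ) (huB : IntegrableOn u B μ) {δ : ℝ≥0∞} (hδ0 : δ ≠ 0)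
    (hδ : δ ≠ ⊤) (hAB : ∀ x ∈ A, ∀ y ∈ B, edist x y ≤ δ) :
    ‖⨍ x in A, u x ∂μ - ⨍ y in B, u y ∂μ‖ₑ ^ p ≤
      δ ^ σ / (μ A * μ B) * ∫⁻ x in A, gagliardoDensity μ σ p u x ∂μ := by
  have : IsFiniteMeasure (μ.restrict A) := isFiniteMeasure_restrict.2 hμA
  have : IsFiniteMeasure (μ.restrict B) := isFiniteMeasure_restrict.2 hμB
  have : NeZero (μ.restrict A) := ⟨by rwa [Ne, Measure.restrict_eq_zero]⟩
  have : NeZero (μ.restrict B) := ⟨by rwa [Ne, Measure.restrict_eq_zero]⟩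
  have hconst : δ ^ σ / μ B ≠ ⊤ :=
    ENNReal.div_ne_top (ENNReal.rpow_ne_top_of_nonneg hσ hδ) hμB0
  calc ‖⨍ x in A, u x ∂μ - ⨍ y in B, u y ∂μ‖ₑ ^ p
      ≤ ⨍⁻ x in A, ⨍⁻ y in B, ‖u x - u y‖ₑ ^ p ∂μ ∂μ :=
        enorm_average_sub_average_rpow_le hp huA huB
    _ ≤ (∫⁻ x in A, δ ^ σ / μ B * gagliardoDensity μ σ p u x ∂μ) / μ A := by
        rw [setLAverage_eq]
        refine ENNReal.div_le_div_right (setLIntegral_mono' hA fun x hx => ?_) _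
        rw [setLAverage_eq, ENNReal.mul_comm_div, mul_div_assoc']
        gcongr
        exact lintegral_enorm_sub_rpow_le_gagliardoDensity hσ hB hδ0 hδ (hAB x hx)
    _ = δ ^ σ / (μ A * μ B) * ∫⁻ x in A, gagliardoDensity μ σ p u x ∂μ := by
        rw [lintegral_const_mul' _ _ hconst]
        simp only [div_eq_mul_inv, ENNReal.mul_inv (.inl hμA0) (.inl hμA)]
        ring

end Gagliardo

section Oscillation

variable {E F : Type*} [NormedAddCommGroup E] [MeasurableSpace E] [NormedAddCommGroup F]
  {μ : Measure E} {σ p q : ℝ} {u : E → F}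

/-- A bound at `x` for the difference between the averages of `u` over a ball of radius `R`
containing `x` and over a ball of radius `R / 2` containing `x`. Any point of the first ball has
distance at most `3 * R` from any point of the second. -/
def oscillationBound (μ : Measure E) (σ p : ℝ) (u : E → F) (R : ℝ) (x : E) : ℝ≥0∞ :=
  (ENNReal.ofReal (3 * R) ^ σ / (μ (Metric.closedBall 0 R) * μ (Metric.closedBall 0 (R / 2)))
    * ∫⁻ y in Metric.closedBall x (2 * R), gagliardoDensity μ σ p u y ∂μ) ^ (1 / p)

/-- The factor controlling `oscillationBound` at scale `R` in `L^q`: by scaling it is a multiple of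
`R ^ ((σ - 2 * d) / p + d / q)` with `d = dim E`. The exponent is `s - d / p + d / q` when
`σ = d + s * p`. -/
def oscillationConst (μ : Measure E) (σ p q R : ℝ) : ℝ≥0∞ :=
  (ENNReal.ofReal (3 * R) ^ σ
    / (μ (Metric.closedBall 0 R) * μ (Metric.closedBall 0 (R / 2)))) ^ (1 / p)
    * μ (Metric.closedBall 0 (2 * R)) ^ (1 / q)

variable [NormedSpace ℝ E] [FiniteDimensional ℝ E] [μ.IsAddHaarMeasure]

local notation "d" => (Module.finrank ℝ E : ℝ)

theorem oscillationConst_ne_top (hp : 0 ≤ p) (hq : 0 ≤ q) (hσ : 0 ≤ σ) {R : ℝ} (hR : 0 < R) :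
    oscillationConst μ σ p q R ≠ ⊤ := by
  have ball_ne_zero {r : ℝ} (hr : 0 < r) : μ (Metric.closedBall 0 r) ≠ 0 :=
    (Metric.measure_closedBall_pos μ 0 hr).ne'
  refine ENNReal.mul_ne_top (ENNReal.rpow_ne_top_of_nonneg (by positivity) (ENNReal.div_ne_top
    (ENNReal.rpow_ne_top_of_nonneg hσ ENNReal.ofReal_ne_top) ?_))
    (ENNReal.rpow_ne_top_of_nonneg (by positivity) measure_closedBall_lt_top.ne)
  exact mul_ne_zero (ball_ne_zero hR) (ball_ne_zero (half_pos hR))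

variable [BorelSpace E]

theorem addHaar_closedBall_mul_eq_rpow {R : ℝ} (hR : 0 ≤ R) {r : ℝ} (hr : 0 ≤ r) :
    μ (Metric.closedBall 0 (R * r)) = ENNReal.ofReal R ^ d * μ (Metric.closedBall 0 r) := by
  rw [Measure.addHaar_closedBall_mul μ 0 hR hr, ENNReal.ofReal_pow hR, ENNReal.rpow_natCast]

theorem oscillationConst_eq_rpow_mul (hp : 0 ≤ p) (hq : 0 ≤ q) (hσ : 0 ≤ σ) {R : ℝ}
    (hR : 0 < R) :
    oscillationConst μ σ p q R =
      ENNReal.ofReal R ^ ((σ - 2 * d) / p + d / q) * oscillationConst μ σ p q 1 := by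
  have ball_one := addHaar_closedBall_mul_eq_rpow (μ := μ) hR.le zero_le_one
  have ball_half := addHaar_closedBall_mul_eq_rpow (μ := μ) hR.le one_half_pos.le
  have ball_two := addHaar_closedBall_mul_eq_rpow (μ := μ) hR.le zero_le_two
  rw [mul_one] at ball_one
  rw [mul_one_div] at ball_half
  set ρ := ENNReal.ofReal R
  have hρ0 : ρ ≠ 0 := (ENNReal.ofReal_pos.2 hR).ne'
  have hρt : ρ ≠ ⊤ := ENNReal.ofReal_ne_top
  have hρd0 : ρ ^ d * ρ ^ d ≠ 0 := by simp [hρ0]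
  have hρd : ρ ^ d * ρ ^ d ≠ ⊤ := by simp [hρ0, hρt, ENNReal.mul_eq_top]
  have scale_quot : ρ ^ σ / (ρ ^ d * ρ ^ d) = ρ ^ (σ - 2 * d) := by
    rw [← ENNReal.rpow_add _ _ hρ0 hρt, ← ENNReal.rpow_sub _ _ hρ0 hρt, two_mul]
  have scale : ρ ^ ((σ - 2 * d) / p + d / q) =
      (ρ ^ σ / (ρ ^ d * ρ ^ d)) ^ (1 / p) * (ρ ^ d) ^ (1 / q) := by
    rw [scale_quot, ← ENNReal.rpow_mul, ← ENNReal.rpow_mul, ← ENNReal.rpow_add _ _ hρ0 hρt,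
      mul_one_div, mul_one_div]
  rw [scale, oscillationConst, oscillationConst, ball_one, ball_half, mul_comm 2 R, ball_two,
    mul_comm 3 R, ENNReal.ofReal_mul hR.le, ENNReal.mul_rpow_of_nonneg _ _ hσ,
    mul_mul_mul_comm (ρ ^ d), ENNReal.mul_div_mul_comm (.inl hρd0) (.inl hρd),
    ENNReal.mul_rpow_of_nonneg _ _ (by positivity), ENNReal.mul_rpow_of_nonneg _ _ (by positivity)]
  simp only [mul_one]
  ring

theorem measurable_oscillationBound (hu : StronglyMeasurable u) (R : ℝ) :
    Measurable (oscillationBound μ σ p u R) :=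
  ((measurable_setLIntegral_closedBall (measurable_gagliardoDensity hu) _).const_mul _).pow_const _

theorem eLpNorm'_oscillationBound_le (hp : 0 < p) (hpq : p ≤ q) (hu : StronglyMeasurable u)
    (R : ℝ) :
    eLpNorm' (oscillationBound μ σ p u R) q μ ≤
      oscillationConst μ σ p q R * (∫⁻ y, gagliardoDensity μ σ p u y ∂μ) ^ (1 / p) := by
  have hq : 0 < q := hp.trans_le hpq
  have hqp : 0 ≤ q / p := by positivity
  have hdensity := measurable_gagliardoDensity (μ := μ) (σ := σ) (p := p) hu
  rw [eLpNorm', one_div q, ENNReal.rpow_inv_le_iff hq]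
  simp only [enorm_eq_self, oscillationBound, oscillationConst, ← ENNReal.rpow_mul,
    one_div_mul_eq_div, ENNReal.mul_rpow_of_nonneg _ _ hqp, ENNReal.mul_rpow_of_nonneg _ _ hq.le,
    div_self hq.ne', ENNReal.rpow_one]
  rw [lintegral_const_mul _ ((measurable_setLIntegral_closedBall hdensity _).pow_const _),
    mul_assoc]
  gcongr
  exact lintegral_setLIntegral_closedBall_rpow_le hdensity ((one_le_div hp).2 hpq)
    fun x => (Measure.addHaar_closedBall_center μ x _).le

variable [NormedSpace ℝ F] [CompleteSpace F]

theorem enorm_setAverage_closedBall_sub_le (hp : 1 ≤ p) (hσ : 0 ≤ σ) (hu : LocallyIntegrable u μ)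
    {R : ℝ} (hR : 0 < R) {x a b : E} (ha : dist x a ≤ R) (hb : dist x b ≤ R / 2) :
    ‖⨍ y in Metric.closedBall a R, u y ∂μ - ⨍ y in Metric.closedBall b (R / 2), u y ∂μ‖ₑ ≤
      oscillationBound μ σ p u R x := by
  have ball_ne_zero (c : E) {r : ℝ} (hr : 0 < r) : μ (Metric.closedBall c r) ≠ 0 :=
    (Metric.measure_closedBall_pos μ c hr).ne'
  have integrableOn_ball (c : E) (r : ℝ) : IntegrableOn u (Metric.closedBall c r) μ :=
    hu.integrableOn_isCompact (isCompact_closedBall c r)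
  have edist_le : ∀ y ∈ Metric.closedBall a R, ∀ z ∈ Metric.closedBall b (R / 2),
      edist y z ≤ ENNReal.ofReal (3 * R) := by
    intro y hy z hz
    rw [edist_dist]
    refine ENNReal.ofReal_le_ofReal ?_
    linarith [dist_triangle4 y a x z, dist_triangle x b z, Metric.mem_closedBall.1 hy,
      Metric.mem_closedBall'.1 hz, dist_comm a x]
  rw [oscillationBound, one_div, ENNReal.le_rpow_inv_iff (by positivity)]
  refine (enorm_setAverage_sub_setAverage_rpow_le hp hσ Metric.isClosed_closedBall.measurableSet
    Metric.isClosed_closedBall.measurableSet (ball_ne_zero a hR) measure_closedBall_lt_top.ne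
    (ball_ne_zero b (half_pos hR)) measure_closedBall_lt_top.ne (integrableOn_ball a R)
    (integrableOn_ball b (R / 2)) (by simpa using hR) ENNReal.ofReal_ne_top edist_le).trans ?_
  rw [Measure.addHaar_closedBall_center μ a, Measure.addHaar_closedBall_center μ b]
  gcongr
  exact Metric.closedBall_subset_closedBall' (by linarith [dist_comm a x])

-- Telescope along the balls `B(c k, R / 2^k)`, which shrink to `x`.
theorem ae_enorm_sub_setAverage_closedBall_le_tsum (hp : 1 ≤ p) (hσ : 0 ≤ σ)
    (hu : LocallyIntegrable u μ) {R : ℝ} (hR : 0 < R) :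
    ∀ᵐ x ∂μ, ∀ a, dist x a ≤ R → ‖u x - ⨍ y in Metric.closedBall a R, u y ∂μ‖ₑ ≤
      ∑' k : ℕ, oscillationBound μ σ p u (R / 2 ^ k) x := by
  filter_upwards [IsUnifLocDoublingMeasure.ae_tendsto_average μ hu 1] with x lebesgue_point a ha
  let c : ℕ → E := Function.update (fun _ => x) 0 a
  have dist_c (k : ℕ) : dist x (c k) ≤ R / 2 ^ k := by
    rcases eq_or_ne k 0 with rfl | hk
    · simpa [c] using ha
    · simp only [c, Function.update_of_ne hk, dist_self]
      positivity
  have radii_tendsto :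
      Filter.Tendsto (fun k : ℕ => R / 2 ^ k) Filter.atTop (nhdsWithin 0 (Ioi 0)) :=
    tendsto_nhdsWithin_iff.2 ⟨tendsto_const_nhds.div_atTop
      (tendsto_pow_atTop_atTop_of_one_lt one_lt_two), .of_forall fun k => by
        simp only [mem_Ioi]; positivity⟩
  have averages_tendsto := lebesgue_point c _ radii_tendsto (.of_forall fun k => by
    simpa using dist_c k)
  have step (k : ℕ) :
      edist (⨍ y in Metric.closedBall (c k) (R / 2 ^ k), u y ∂μ)
        (⨍ y in Metric.closedBall (c (k + 1)) (R / 2 ^ (k + 1)), u y ∂μ) ≤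
      oscillationBound μ σ p u (R / 2 ^ k) x := by
    have half : R / 2 ^ (k + 1) = R / 2 ^ k / 2 := by rw [pow_succ, div_div]
    have dist_succ := dist_c (k + 1)
    rw [edist_eq_enorm_sub]
    rw [half] at dist_succ ⊢
    exact enorm_setAverage_closedBall_sub_le hp hσ hu (by positivity) (dist_c k) dist_succ
  have chain := edist_le_tsum_of_edist_le_of_tendsto₀ _ step averages_tendsto
  rw [edist_comm, edist_eq_enorm_sub] at chain
  simpa [c] using chain

theorem eLpNorm'_sub_setAverage_closedBall_le_tsum (hp : 1 ≤ p) (hpq : p ≤ q) (hσ : 0 ≤ σ)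
    (hum : StronglyMeasurable u) (hu : LocallyIntegrable u μ) {Ω : Set E} (hΩ : MeasurableSet Ω)
    {R : ℝ} (hR : 0 < R) {c : E → E} (hc : ∀ x ∈ Ω, dist x (c x) ≤ R) :
    eLpNorm' (fun x => u x - ⨍ y in Metric.closedBall (c x) R, u y ∂μ) q (μ.restrict Ω) ≤
      (∑' k : ℕ, oscillationConst μ σ p q (R / 2 ^ k)) *
        (∫⁻ y, gagliardoDensity μ σ p u y ∂μ) ^ (1 / p) := by
  have hq : 0 ≤ q := by linarith
  have pointwise : ∀ᵐ x ∂μ.restrict Ω, ‖u x - ⨍ y in Metric.closedBall (c x) R, u y ∂μ‖ₑ ≤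
      ‖∑' k : ℕ, oscillationBound μ σ p u (R / 2 ^ k) x‖ₑ := by
    filter_upwards [ae_restrict_of_ae (ae_enorm_sub_setAverage_closedBall_le_tsum hp hσ hu hR),
      ae_restrict_mem hΩ] with x hx hxΩ
    exact hx (c x) (hc x hxΩ)
  calc eLpNorm' (fun x => u x - ⨍ y in Metric.closedBall (c x) R, u y ∂μ) q (μ.restrict Ω)
      ≤ eLpNorm' (fun x => ∑' k : ℕ, oscillationBound μ σ p u (R / 2 ^ k) x) q μ :=
        (eLpNorm'_mono_enorm_ae hq pointwise).trans
          (eLpNorm'_mono_measure _ Measure.restrict_le_self hq)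
    _ ≤ ∑' k : ℕ, eLpNorm' (oscillationBound μ σ p u (R / 2 ^ k)) q μ :=
        eLpNorm'_tsum_le (hp.trans hpq) fun k => measurable_oscillationBound hum _
    _ ≤ ∑' k : ℕ, oscillationConst μ σ p q (R / 2 ^ k) *
          (∫⁻ y, gagliardoDensity μ σ p u y ∂μ) ^ (1 / p) :=
        ENNReal.tsum_le_tsum fun k => eLpNorm'_oscillationBound_le (by linarith) hpq hum _
    _ = _ := ENNReal.tsum_mul_right

theorem tsum_oscillationConst_div_two_pow (hp : 0 ≤ p) (hq : 0 ≤ q) (hσ : 0 ≤ σ) {R : ℝ}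
    (hR : 0 < R) :
    ∑' k : ℕ, oscillationConst μ σ p q (R / 2 ^ k) =
      ENNReal.ofReal R ^ ((σ - 2 * d) / p + d / q) *
        ((1 - 2⁻¹ ^ ((σ - 2 * d) / p + d / q))⁻¹ * oscillationConst μ σ p q 1) := by
  have ofReal_div_two_pow (k : ℕ) :
      ENNReal.ofReal (R / 2 ^ k) = ENNReal.ofReal R * 2⁻¹ ^ k := by
    rw [div_eq_mul_inv, ENNReal.ofReal_mul hR.le, ← inv_pow, ENNReal.ofReal_pow (by norm_num),
      ENNReal.ofReal_inv_of_pos two_pos, ENNReal.ofReal_ofNat]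
  set γ := (σ - 2 * d) / p + d / q
  have term_eq (k : ℕ) : oscillationConst μ σ p q (R / 2 ^ k) =
      ENNReal.ofReal R ^ γ * (2⁻¹ ^ γ) ^ k * oscillationConst μ σ p q 1 := by
    rw [oscillationConst_eq_rpow_mul hp hq hσ (by positivity), ofReal_div_two_pow,
      ENNReal.mul_rpow_of_ne_top ENNReal.ofReal_ne_top (ENNReal.pow_ne_top (by norm_num)),
      ← ENNReal.rpow_natCast, ← ENNReal.rpow_natCast, ← ENNReal.rpow_mul, ← ENNReal.rpow_mul,
      mul_comm (k : ℝ)]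
  simp only [term_eq, ENNReal.tsum_mul_left, ENNReal.tsum_mul_right, ENNReal.tsum_geometric]
  ring

theorem exists_tsum_oscillationConst_le (hp : 0 ≤ p) (hq : 0 ≤ q) (hσ : 0 ≤ σ)
    (hγ : 0 < (σ - 2 * d) / p + d / q) {K ε : ℝ≥0∞} (hK : K ≠ ⊤) (hε : ε ≠ 0) :
    ∃ R : ℝ, 0 < R ∧ (∑' k : ℕ, oscillationConst μ σ p q (R / 2 ^ k)) * K ≤ ε := by
  set γ := (σ - 2 * d) / p + d / q with hγ_def
  set C := (1 - 2⁻¹ ^ γ)⁻¹ * oscillationConst μ σ p q 1 with hC_def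
  have ratio_lt_one : (2⁻¹ : ℝ≥0∞) ^ γ < 1 := ENNReal.rpow_lt_one (by norm_num) hγ
  have hC : C ≠ ⊤ := ENNReal.mul_ne_top (ENNReal.inv_ne_top.2 (tsub_pos_of_lt ratio_lt_one).ne')
    (oscillationConst_ne_top hp hq hσ one_pos)
  obtain ⟨t, ht, htε⟩ := ENNReal.exists_nnreal_pos_mul_lt (ENNReal.mul_ne_top hC hK) hε
  refine ⟨(t : ℝ) ^ γ⁻¹, by positivity, ?_⟩
  rw [tsum_oscillationConst_div_two_pow hp hq hσ (by positivity), ← hγ_def, ← hC_def,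
    ENNReal.ofReal_rpow_of_nonneg (by positivity) hγ.le, Real.rpow_inv_rpow t.coe_nonneg hγ.ne',
    ENNReal.ofReal_coe_nnreal, mul_assoc]
  exact htε.le

end Oscillation

section FiniteNet

theorem exists_simpleFunc_dist_le_of_totallyBounded {X : Type*} [PseudoMetricSpace X] [Nonempty X]
    [MeasurableSpace X] [OpensMeasurableSpace X] {Ω : Set X} (hΩ : TotallyBounded Ω) {r : ℝ}
    (hr : 0 < r) : ∃ P : SimpleFunc X X, ∀ x ∈ Ω, dist x (P x) ≤ r := by
  classical
  obtain ⟨t, ht, hΩt⟩ := Metric.totallyBounded_iff.1 hΩ r hr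
  suffices ∃ P : SimpleFunc X X, ∀ x ∈ ⋃ y ∈ t, Metric.ball y r, dist x (P x) ≤ r from
    this.imp fun P hP x hx => hP x (hΩt hx)
  clear hΩt
  induction t, ht using Set.Finite.induction_on with
  | empty => exact ⟨.const X (Classical.arbitrary X), by simp⟩
  | @insert y t _ _ ih =>
    obtain ⟨P, hP⟩ := ih
    refine ⟨.piecewise (Metric.ball y r) measurableSet_ball (.const X y) P, fun x hx => ?_⟩
    rw [SimpleFunc.piecewise_apply]
    split_ifs with hxy
    · exact (Metric.mem_ball.1 hxy).le
    · rw [biUnion_insert] at hx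
      exact hP x (hx.resolve_left hxy)

theorem exists_finite_simpleFunc_norm_comp_sub_le {α β F : Type*} [MeasurableSpace α]
    [NormedAddCommGroup F] [ProperSpace F] (P : SimpleFunc α β) (T : ℝ) {η : ℝ} (hη : 0 < η) :
    ∃ G : Set (SimpleFunc α F), G.Finite ∧ ∀ a : β → F, (∀ b, ‖a b‖ ≤ T) →
      ∃ g ∈ G, ∀ x, ‖a (P x) - g x‖ ≤ η := by
  obtain ⟨t, ht, hcover⟩ := Metric.totallyBounded_iff.1
    (isCompact_closedBall (0 : P.range → F) (max T 0)).totallyBounded η hη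
  refine ⟨(fun w => P.map (Function.extend Subtype.val w 0)) '' t, ht.image _, fun a ha => ?_⟩
  have values_mem : (fun b : P.range => a b) ∈ Metric.closedBall 0 (max T 0) := by
    rw [mem_closedBall_zero_iff, pi_norm_le_iff_of_nonneg (le_max_right _ _)]
    exact fun b => (ha b).trans (le_max_left _ _)
  obtain ⟨w, hw, hwa⟩ := mem_iUnion₂.1 (hcover values_mem)
  refine ⟨_, mem_image_of_mem _ hw, fun x => ?_⟩
  have extend_apply := Subtype.val_injective.extend_apply w 0 ⟨P x, P.mem_range_self x⟩
  rw [SimpleFunc.map_apply, extend_apply, ← dist_eq_norm]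
  exact (dist_le_pi_dist (fun b : P.range => a b) w ⟨P x, P.mem_range_self x⟩).trans hwa.le

variable {E F : Type*} [NormedAddCommGroup E] [NormedSpace ℝ E] [FiniteDimensional ℝ E]
  [MeasurableSpace E] [BorelSpace E] [NormedAddCommGroup F] [NormedSpace ℝ F]
  {μ : Measure E} [μ.IsAddHaarMeasure] {σ s p q : ℝ} {u : E → F} {Ω : Set E} {S ε : ℝ≥0∞}

local notation "d" => (Module.finrank ℝ E : ℝ)

theorem norm_setAverage_closedBall_le (hp : 1 ≤ p) (hum : AEStronglyMeasurable u μ)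
    (hS : S ≠ ⊤) (huS : ∫⁻ x, ‖u x‖ₑ ^ p ∂μ ≤ S) {R : ℝ} (hR : 0 < R) (c : E) :
    ‖⨍ y in Metric.closedBall c R, u y ∂μ‖ ≤
      ((S / μ (Metric.closedBall 0 R)) ^ (1 / p)).toReal := by
  have ball_ne_zero (c : E) : μ (Metric.closedBall c R) ≠ 0 :=
    (Metric.measure_closedBall_pos μ c hR).ne'
  have : IsFiniteMeasure (μ.restrict (Metric.closedBall c R)) :=
    isFiniteMeasure_restrict.2 measure_closedBall_lt_top.ne
  have : NeZero (μ.restrict (Metric.closedBall c R)) :=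
    ⟨by rw [Ne, Measure.restrict_eq_zero]; exact ball_ne_zero c⟩
  have bound_ne_top : (S / μ (Metric.closedBall 0 R)) ^ (1 / p) ≠ ⊤ :=
    ENNReal.rpow_ne_top_of_nonneg (by positivity) (ENNReal.div_ne_top hS (ball_ne_zero 0))
  rw [← toReal_enorm, ENNReal.toReal_le_toReal enorm_ne_top bound_ne_top, one_div,
    ENNReal.le_rpow_inv_iff (by positivity)]
  refine (enorm_average_rpow_le hp hum.restrict).trans ?_
  rw [setLAverage_eq, Measure.addHaar_closedBall_center μ c]
  gcongr
  exact (setLIntegral_le_lintegral _ _).trans huS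

variable [ProperSpace F]

theorem exists_finite_eLpNorm'_sub_le_of_le (hp : 1 ≤ p) (hpq : p ≤ q) (hσ : 0 ≤ σ)
    (hγ : 0 < (σ - 2 * d) / p + d / q) (hΩ : MeasurableSet Ω) (hΩb : Bornology.IsBounded Ω)
    (hS : S ≠ ⊤) (hε : ε ≠ 0) :
    ∃ G : Set (SimpleFunc E F), G.Finite ∧ ∀ u : E → F, StronglyMeasurable u →
      ∫⁻ x, ‖u x‖ₑ ^ p ∂μ ≤ S → ∫⁻ x, gagliardoDensity μ σ p u x ∂μ ≤ S →
      ∃ g ∈ G, eLpNorm' (u - ⇑g) q (μ.restrict Ω) ≤ ε := by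
  have hq : 1 ≤ q := hp.trans hpq
  have hq0 : 0 < q := by positivity
  obtain ⟨R, hR, oscillation_le⟩ := exists_tsum_oscillationConst_le (μ := μ) (by positivity)
    hq0.le hσ hγ (ENNReal.rpow_ne_top_of_nonneg (by positivity : 0 ≤ 1 / p) hS)
    (ENNReal.half_pos hε).ne'
  obtain ⟨c, hc⟩ := exists_simpleFunc_dist_le_of_totallyBounded
    (hΩb.isCompact_closure.totallyBounded.subset subset_closure) hR
  obtain ⟨η, hη, hηε⟩ := ENNReal.exists_nnreal_pos_mul_lt (ENNReal.rpow_ne_top_of_nonneg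
    (by positivity : 0 ≤ 1 / q) (hΩb.measure_lt_top (μ := μ)).ne) (ENNReal.half_pos hε).ne'
  obtain ⟨G, hG, approx⟩ := exists_finite_simpleFunc_norm_comp_sub_le (F := F) c
    ((S / μ (Metric.closedBall 0 R)) ^ (1 / p)).toReal (NNReal.coe_pos.2 hη)
  refine ⟨G, hG, fun u hum huS hgS => ?_⟩
  have hu := locallyIntegrable_of_lintegral_enorm_rpow_lt_top hp hum.aestronglyMeasurable
    (huS.trans_lt hS.lt_top)
  obtain ⟨g, hgG, hg⟩ := approx (fun b => ⨍ y in Metric.closedBall b R, u y ∂μ) fun b =>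
    norm_setAverage_closedBall_le hp hum.aestronglyMeasurable hS huS hR b
  let v : SimpleFunc E F := c.map fun b => ⨍ y in Metric.closedBall b R, u y ∂μ
  have sub_average_le : eLpNorm' (u - ⇑v) q (μ.restrict Ω) ≤ ε / 2 :=
    calc eLpNorm' (u - ⇑v) q (μ.restrict Ω)
        ≤ (∑' k : ℕ, oscillationConst μ σ p q (R / 2 ^ k)) *
            (∫⁻ x, gagliardoDensity μ σ p u x ∂μ) ^ (1 / p) :=
          eLpNorm'_sub_setAverage_closedBall_le_tsum hp hpq hσ hum hu hΩ hR hc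
      _ ≤ (∑' k : ℕ, oscillationConst μ σ p q (R / 2 ^ k)) * S ^ (1 / p) := by gcongr
      _ ≤ ε / 2 := oscillation_le
  have average_sub_le : eLpNorm' (⇑v - ⇑g) q (μ.restrict Ω) ≤ ε / 2 :=
    (eLpNorm'_le_mul_rpow_measure_univ_of_norm_le hq0 hg).trans
      (by simpa only [Measure.restrict_apply_univ] using hηε.le)
  refine ⟨g, hgG, ?_⟩
  calc eLpNorm' (u - ⇑g) q (μ.restrict Ω)
      = eLpNorm' ((u - ⇑v) + (⇑v - ⇑g)) q (μ.restrict Ω) := by rw [sub_add_sub_cancel]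
    _ ≤ eLpNorm' (u - ⇑v) q (μ.restrict Ω) + eLpNorm' (⇑v - ⇑g) q (μ.restrict Ω) :=
        eLpNorm'_add_le (hum.sub v.stronglyMeasurable).aestronglyMeasurable
          (v.stronglyMeasurable.sub g.stronglyMeasurable).aestronglyMeasurable hq
    _ ≤ ε / 2 + ε / 2 := by gcongr
    _ = ε := ENNReal.add_halves ε

theorem exists_finite_eLpNorm'_sub_le (hs : 0 < s) (hp : 1 ≤ p) (hq : 0 < q)
    (hsq : d / p - d / q < s) (hΩ : MeasurableSet Ω) (hΩb : Bornology.IsBounded Ω)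
    (hS : S ≠ ⊤) (hε : ε ≠ 0) :
    ∃ G : Set (SimpleFunc E F), G.Finite ∧ ∀ u : E → F, StronglyMeasurable u →
      ∫⁻ x, ‖u x‖ₑ ^ p ∂μ ≤ S → ∫⁻ x, gagliardoDensity μ (d + s * p) p u x ∂μ ≤ S →
      ∃ g ∈ G, eLpNorm' (u - ⇑g) q (μ.restrict Ω) ≤ ε := by
  have hexp : 0 ≤ 1 / q - 1 / max p q := by
    rw [sub_nonneg]
    exact one_div_le_one_div_of_le hq (le_max_right _ _)
  have hγ : 0 < (d + s * p - 2 * d) / p + d / max p q := by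
    have exponent_eq : (d + s * p - 2 * d) / p = s - d / p := by field_simp; ring
    rcases max_cases p q with ⟨h, -⟩ | ⟨h, -⟩ <;> rw [h, exponent_eq] <;> linarith
  obtain ⟨η, hη, hηε⟩ := ENNReal.exists_nnreal_pos_mul_lt (ENNReal.rpow_ne_top_of_nonneg hexp
    (hΩb.measure_lt_top (μ := μ)).ne) hε
  obtain ⟨G, hG, approx⟩ := exists_finite_eLpNorm'_sub_le_of_le (μ := μ) (F := F) hp
    (le_max_left p q) (by positivity) hγ hΩ hΩb hS (ENNReal.coe_ne_zero.2 hη.ne')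
  refine ⟨G, hG, fun u hum huS hgS => ?_⟩
  obtain ⟨g, hgG, hg⟩ := approx u hum huS hgS
  refine ⟨g, hgG, ?_⟩
  calc eLpNorm' (u - ⇑g) q (μ.restrict Ω)
      ≤ eLpNorm' (u - ⇑g) (max p q) (μ.restrict Ω) * μ Ω ^ (1 / q - 1 / max p q) := by
        rw [← Measure.restrict_apply_univ Ω]
        exact eLpNorm'_le_eLpNorm'_mul_rpow_measure_univ hq (le_max_right p q)
          (hum.sub g.stronglyMeasurable).aestronglyMeasurable
    _ ≤ η * μ Ω ^ (1 / q - 1 / max p q) := by gcongr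
    _ ≤ ε := hηε.le

end FiniteNet

section Euclidean

variable {n : ℕ} {s p q : ℝ} {Ω : Set (EuclideanSpace ℝ (Fin n))}

theorem ofReal_abs_rpow (hp : 0 ≤ p) (a : ℝ) : ENNReal.ofReal (|a| ^ p) = ‖a‖ₑ ^ p := by
  rw [enorm_eq_ofReal_abs, ENNReal.ofReal_rpow_of_nonneg (abs_nonneg a) hp]

theorem ofReal_abs_sub_rpow_div_dist_rpow {X : Type*} [MetricSpace X] {σ : ℝ} (hp : 0 < p)
    (hσ : 0 ≤ σ) (u : X → ℝ) (x y : X) :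
    ENNReal.ofReal (|u x - u y| ^ p / dist x y ^ σ) = ‖u x - u y‖ₑ ^ p / edist x y ^ σ := by
  rcases eq_or_ne x y with rfl | hxy
  · simp [hp, hp.ne']
  · rw [ENNReal.ofReal_div_of_pos (by have := dist_pos.2 hxy; positivity), ofReal_abs_rpow hp.le,
      edist_dist, ENNReal.ofReal_rpow_of_nonneg dist_nonneg hσ]

theorem fracNormPow_univ (hs : 0 ≤ s) (hp : 0 < p) (u : EuclideanSpace ℝ (Fin n) → ℝ) :
    fracNormPow n s p univ u =
      (∫⁻ x, ‖u x‖ₑ ^ p) + ∫⁻ x, gagliardoDensity volume (n + s * p) p u x := by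
  simp only [fracNormPow, gagliardoDensity, Measure.restrict_univ, ofReal_abs_rpow hp.le,
    ofReal_abs_sub_rpow_div_dist_rpow hp (by positivity : 0 ≤ n + s * p)]

theorem IsExtensionDomain.exists_fracNormPow_univ_le (hΩ : IsExtensionDomain n s p Ω)
    (hp : 0 < p) {S : ℝ≥0∞} (hS : S ≠ ⊤) :
    ∃ S' : ℝ≥0∞, S' ≠ ⊤ ∧ ∀ u, Measurable u → fracNormPow n s p Ω u ≤ S →
      ∃ v, Measurable v ∧ EqOn v u Ω ∧ fracNormPow n s p univ v ≤ S' := by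
  obtain ⟨C, -, extend⟩ := hΩ
  refine ⟨(ENNReal.ofReal C * S ^ (1 / p)) ^ p, ENNReal.rpow_ne_top_of_nonneg hp.le
    (ENNReal.mul_ne_top ENNReal.ofReal_ne_top
      (ENNReal.rpow_ne_top_of_nonneg (by positivity) hS)), fun u hum huS => ?_⟩
  obtain ⟨v, hvm, hvu, hv⟩ := extend u hum (huS.trans_lt hS.lt_top)
  refine ⟨v, hvm, hvu, ?_⟩
  rw [← ENNReal.rpow_inv_le_iff hp, ← one_div]
  exact hv.trans (by gcongr)

theorem div_sub_div_lt_of_lt_div {a : ℝ} (hp : 0 < p) (hsp : s * p < a) (hq : 0 < q)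
    (hq' : q < a * p / (a - s * p)) : a / p - a / q < s := by
  rw [lt_div_iff₀ (sub_pos.2 hsp)] at hq'
  rw [div_sub_div _ _ hp.ne' hq.ne', div_lt_iff₀ (by positivity)]
  linarith

end Euclidean

theorem fractional_compact_embedding_general {n : ℕ} (s p : ℝ) (hs : 0 < s) (hp : 1 ≤ p)
    (q : ℝ) (hq : 0 < q) (hsq : n / p - n / q < s)
    (Ω : Set (EuclideanSpace ℝ (Fin n))) (hΩ : MeasurableSet Ω) (hΩb : Bornology.IsBounded Ω)
    (hΩext : IsExtensionDomain n s p Ω)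
    (I : Set (EuclideanSpace ℝ (Fin n) → ℝ)) (hImeas : ∀ f ∈ I, Measurable f)
    (hIbdd : ∃ M : ℝ, ∀ f ∈ I, (∫⁻ x in Ω, ENNReal.ofReal (|f x| ^ p)) ≤ ENNReal.ofReal M)
    (hIgag : ∃ M' : ℝ, ∀ f ∈ I,
      (∫⁻ x in Ω, ∫⁻ y in Ω, ENNReal.ofReal (|f x - f y| ^ p / dist x y ^ ((n : ℝ) + s * p)))
        ≤ ENNReal.ofReal M') :
    ∀ δ : ℝ, 0 < δ → ∃ G : Set (EuclideanSpace ℝ (Fin n) → ℝ), G.Finite ∧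
      ∀ f ∈ I, ∃ g ∈ G,
        (∫⁻ x in Ω, ENNReal.ofReal (|f x - g x| ^ q)) ^ (1 / q) < ENNReal.ofReal δ := by
  intro δ hδ
  have hp0 : 0 < p := by positivity
  obtain ⟨M, hM⟩ := hIbdd
  obtain ⟨M', hM'⟩ := hIgag
  obtain ⟨S, hS, extend⟩ := hΩext.exists_fracNormPow_univ_le hp0
    (ENNReal.add_ne_top.2 ⟨ENNReal.ofReal_ne_top (r := M), ENNReal.ofReal_ne_top (r := M')⟩)
  obtain ⟨ε, hε, hεδ⟩ := exists_between (ENNReal.ofReal_pos.2 hδ)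
  obtain ⟨G, hG, approx⟩ := exists_finite_eLpNorm'_sub_le (F := ℝ) (μ := volume) hs hp hq
    (by simpa using hsq) hΩ hΩb hS hε.ne'
  refine ⟨(⇑) '' G, hG.image _, fun f hf => ?_⟩
  obtain ⟨v, hvm, hvf, hv⟩ := extend f (hImeas f hf) (add_le_add (hM f hf) (hM' f hf))
  rw [fracNormPow_univ hs.le hp0] at hv
  obtain ⟨g, hgG, hg⟩ := approx v hvm.stronglyMeasurable (le_self_add.trans hv)
    (by simpa using le_add_self.trans hv)
  refine ⟨g, mem_image_of_mem _ hgG, lt_of_le_of_lt ?_ hεδ⟩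
  calc (∫⁻ x in Ω, ENNReal.ofReal (|f x - g x| ^ q)) ^ (1 / q)
      = eLpNorm' (v - ⇑g) q (volume.restrict Ω) := by
        rw [eLpNorm', setLIntegral_congr_fun hΩ fun x hx => ?_]
        rw [ofReal_abs_rpow hq.le, Pi.sub_apply, hvf hx]
    _ ≤ ε := hg

/-- fractional compactness theorem. If `sp < n`, `q < p* = np/(n−sp)`, `Ω` is a
bounded extension domain for `W^{s,p}`, and `𝓘 ⊆ L^p(Ω)` is bounded with uniformly bounded
Gagliardo seminorms, then `𝓘` is totally bounded in `L^q(Ω)`. -/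
theorem fractional_compact_embedding {n : ℕ} (s p : ℝ)
    (hs : s ∈ Set.Ioo (0 : ℝ) 1) (hp : 1 ≤ p) (hspn : s * p < n)
    (q : ℝ) (hq : 1 ≤ q) (hq' : q < n * p / (n - s * p))
    (Ω : Set (EuclideanSpace ℝ (Fin n))) (hΩo : IsOpen Ω) (hΩb : Bornology.IsBounded Ω)
    (hΩext : IsExtensionDomain n s p Ω)
    (I : Set (EuclideanSpace ℝ (Fin n) → ℝ)) (hImeas : ∀ f ∈ I, Measurable f)
    (hIbdd : ∃ M : ℝ, ∀ f ∈ I, (∫⁻ x in Ω, ENNReal.ofReal (|f x| ^ p)) ≤ ENNReal.ofReal M)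
    (hIgag : ∃ M' : ℝ, ∀ f ∈ I,
      (∫⁻ x in Ω, ∫⁻ y in Ω, ENNReal.ofReal (|f x - f y| ^ p / dist x y ^ ((n : ℝ) + s * p)))
        ≤ ENNReal.ofReal M') :
    ∀ δ : ℝ, 0 < δ → ∃ G : Set (EuclideanSpace ℝ (Fin n) → ℝ), G.Finite ∧
      ∀ f ∈ I, ∃ g ∈ G,
        (∫⁻ x in Ω, ENNReal.ofReal (|f x - g x| ^ q)) ^ (1 / q) < ENNReal.ofReal δ :=
  fractional_compact_embedding_general s p hs.1 hp q (by positivity)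
    (div_sub_div_lt_of_lt_div (by positivity) hspn (by positivity) hq') Ω hΩo.measurableSet hΩb
    hΩext I hImeas hIbdd hIgag
end
end

section
/- Let H be a real Hilbert space and f : H → ℝ an even C² functional satisfying the Palais–Smale condition (every sequence (u_j) in H with (f(u_j))_j bounded and f'(u_j) → 0 in the dual norm is relatively compact in H). For c ∈ ℝ set f^c = { u ∈ H : f(u) ≤ c }. Then for all c₁ ≤ c₂ < f(0): gen(f^{c₂}) ≤ gen(f^{c₁}) + #{ {−u, u} : u ∈ H, f'(u) = 0, c₁ ≤ f(u) ≤ c₂ }, where # denotes the number of such (unordered) pairs of critical points (the inequality being trivial if this number is infinite). -/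
open MeasureTheory Real Set
open scoped ENNReal

noncomputable section

/-- The Krasnoselskii genus of a subset `E` of a real normed space `H`: the least `m ∈ ℕ`
(as an element of `ℕ∞`, with value `⊤` if none exists) such that there is a continuous odd
map `φ : H → ℝ^m` with `φ(u) ≠ 0` for every `u ∈ E`. -/
def genus {H : Type*} [NormedAddCommGroup H] (E : Set H) : ℕ∞ :=
  sInf {m : ℕ∞ | ∃ k : ℕ, m = (k : ℕ∞) ∧
    ∃ φ : H → EuclideanSpace ℝ (Fin k), Continuous φ ∧ (∀ u, φ (-u) = -(φ u)) ∧
      ∀ u ∈ E, φ u ≠ 0}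

/-!
By the Palais–Smale condition, on a closed set containing no critical point of level `c`
the derivative of `f` is bounded below in norm near that level. There an odd field `w` of small
steps with `f (u - w u) ≤ f u - κ ‖w u‖` pushes every point of a thin strip around the level below
it: an orbit that stayed in the strip would have finite length and converge to a zero of `w`, where
the derivative is too small. Interpolating the iterates in time gives an odd deformation of
`f^{c+ε}` into `f^{c-ε}`, so the genus does not grow across a regular level.

If level `c < f 0` carries finitely many critical points, all of them nonzero, then some continuous
linear functional `ℓ` vanishes at none of them. Deforming only on `{ℓ = 0}` and adjoining `ℓ` as one
more odd coordinate shows that the genus grows by at most one, hence by at most the number of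
critical pairs at that level. A continuity induction on the level adds up these crossings.
-/

open Filter Function Topology

section Genus

variable {H : Type*} [NormedAddCommGroup H] {A B E : Set H}

theorem genus_le_of_odd {k : ℕ} {φ : H → EuclideanSpace ℝ (Fin k)} (hφ : Continuous φ)
    (hodd : φ.Odd) (hE : ∀ u ∈ E, φ u ≠ 0) : genus E ≤ k :=
  sInf_le ⟨k, rfl, φ, hφ, hodd, hE⟩

theorem exists_odd_of_genus_ne_top (h : genus E ≠ ⊤) :
    ∃ k : ℕ, genus E = k ∧ ∃ φ : H → EuclideanSpace ℝ (Fin k),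
      Continuous φ ∧ φ.Odd ∧ ∀ u ∈ E, φ u ≠ 0 :=
  csInf_mem <| nonempty_iff_ne_empty.2 fun hempty =>
    h ((congrArg sInf hempty).trans _root_.sInf_empty)

theorem genus_mono (h : A ⊆ B) : genus A ≤ genus B :=
  sInf_le_sInf fun _ ⟨k, hk, φ, hφ, hodd, hB⟩ => ⟨k, hk, φ, hφ, hodd, fun u hu => hB u (h hu)⟩

theorem genus_le_finrank {V : Type*} [NormedAddCommGroup V] [NormedSpace ℝ V]
    [FiniteDimensional ℝ V] {φ : H → V} (hφ : Continuous φ) (hodd : φ.Odd)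
    (hE : ∀ u ∈ E, φ u ≠ 0) : genus E ≤ Module.finrank ℝ V :=
  genus_le_of_odd (φ := toEuclidean ∘ φ) (toEuclidean.continuous.comp hφ)
    (fun u => by simp only [comp_apply, hodd u, map_neg])
    fun u hu => toEuclidean.map_ne_zero_iff.2 (hE u hu)

theorem genus_le_genus_add_finrank {V : Type*} [NormedAddCommGroup V] [NormedSpace ℝ V]
    [FiniteDimensional ℝ V] {η : H → H} (hη : Continuous η) (hηodd : η.Odd)
    {g : H → V} (hg : Continuous g) (hgodd : g.Odd) (hAB : ∀ u ∈ A, g u = 0 → η u ∈ B) :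
    genus A ≤ genus B + Module.finrank ℝ V := by
  by_cases hB : genus B = ⊤
  · simp [hB]
  obtain ⟨k, hk, φ, hφ, hφodd, hφB⟩ := exists_odd_of_genus_ne_top hB
  have hA : ∀ u ∈ A, (φ (η u), g u) ≠ 0 := fun u hu h =>
    hφB _ (hAB u hu (congrArg Prod.snd h)) (congrArg Prod.fst h)
  have hodd : (fun u => (φ (η u), g u)).Odd := fun u => by
    simp only [hηodd u, hφodd (η u), hgodd u, Prod.neg_mk]
  calc genus A ≤ Module.finrank ℝ (EuclideanSpace ℝ (Fin k) × V) :=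
        genus_le_finrank ((hφ.comp hη).prodMk hg) hodd hA
    _ = genus B + Module.finrank ℝ V := by
        rw [Module.finrank_prod, finrank_euclideanSpace_fin, hk, Nat.cast_add]

end Genus

section DiscreteDescent

theorem mul_dist_iterate_le_sub {X : Type*} [PseudoMetricSpace X] {T : X → X} {f : X → ℝ}
    {κ : ℝ} (hκ : 0 ≤ κ) (hT : ∀ x, κ * dist x (T x) ≤ f x - f (T x)) (u : X) {m n : ℕ}
    (hmn : m ≤ n) : κ * dist (T^[m] u) (T^[n] u) ≤ f (T^[m] u) - f (T^[n] u) := by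
  induction n, hmn using Nat.le_induction with
  | base => simp
  | succ n _ ih =>
    rw [iterate_succ_apply']
    calc κ * dist (T^[m] u) (T (T^[n] u))
        ≤ κ * (dist (T^[m] u) (T^[n] u) + dist (T^[n] u) (T (T^[n] u))) := by
          gcongr
          exact dist_triangle _ _ _
      _ ≤ f (T^[m] u) - f (T (T^[n] u)) := by linarith [hT (T^[n] u)]

theorem exists_isFixedPt_of_mul_dist_le_sub {X : Type*} [MetricSpace X] [CompleteSpace X]
    {T : X → X} (hTc : Continuous T) {f : X → ℝ} (hf : Continuous f) {κ : ℝ} (hκ : 0 < κ)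
    (hT : ∀ x, κ * dist x (T x) ≤ f x - f (T x)) {u : X} {b : ℝ} (hb : ∀ n, b ≤ f (T^[n] u)) :
    ∃ y, IsFixedPt T y ∧ κ * dist u y ≤ f u - f y ∧ b ≤ f y := by
  have hdist := fun {m n} => mul_dist_iterate_le_sub hκ.le hT u (m := m) (n := n)
  have hanti : Antitone fun n => f (T^[n] u) := fun m n hmn =>
    sub_nonneg.1 ((mul_nonneg hκ.le dist_nonneg).trans (hdist hmn))
  have hbdd : BddBelow (range fun n => f (T^[n] u)) := ⟨b, forall_mem_range.2 hb⟩
  have hcauchy : CauchySeq fun n => T^[n] u := by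
    refine cauchySeq_of_le_tendsto_0' (fun n => (f (T^[n] u) - ⨅ k, f (T^[k] u)) / κ)
      (fun m n hmn => (le_div_iff₀' hκ).2 ((hdist hmn).trans ?_)) ?_
    · gcongr
      exact ciInf_le hbdd n
    · simpa using ((tendsto_atTop_ciInf hanti hbdd).sub_const (⨅ k, f (T^[k] u))).div_const κ
  obtain ⟨y, hy⟩ := cauchySeq_tendsto_of_complete hcauchy
  have hfy : Tendsto (fun n => f (T^[n] u)) atTop (𝓝 (f y)) := (hf.tendsto y).comp hy
  exact ⟨y, isFixedPt_of_tendsto_iterate hy hTc.continuousAt,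
    le_of_tendsto_of_tendsto' ((tendsto_const_nhds.dist hy).const_mul κ)
      (tendsto_const_nhds.sub hfy) fun n => hdist n.zero_le,
    ge_of_tendsto' hfy hb⟩

end DiscreteDescent

section PolygonalFlow

variable {H : Type*} [NormedAddCommGroup H] [NormedSpace ℝ H] {w : H → H}

/-- The iteration `u ↦ u - w u` made continuous in time by traversing each step at constant speed:
`polygonalPath w s u k` is the position at time `min s k` of the polygon through the iterates
of `u`. -/
def polygonalPath (w : H → H) (s : ℝ) (u : H) : ℕ → H
  | 0 => u
  | k + 1 => polygonalPath w s u k -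
      (projIcc (0 : ℝ) 1 zero_le_one (s - k) : ℝ) • w (polygonalPath w s u k)

/-- The position at time `s` of the polygon through the iterates of `u` under `u ↦ u - w u`. -/
def polygonalFlow (w : H → H) (s : ℝ) (u : H) : H :=
  polygonalPath w s u ⌈s⌉₊

theorem continuous_polygonalPath (hw : Continuous w) (k : ℕ) :
    Continuous fun p : ℝ × H => polygonalPath w p.1 p.2 k := by
  induction k with
  | zero => exact continuous_snd
  | succ k ih =>
    have hclamp : Continuous fun p : ℝ × H => (projIcc (0 : ℝ) 1 zero_le_one (p.1 - k) : ℝ) :=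
      continuous_subtype_val.comp (continuous_projIcc.comp (continuous_fst.sub continuous_const))
    exact ih.sub (hclamp.smul (hw.comp ih))

theorem polygonalPath_neg (hw : w.Odd) (s : ℝ) (u : H) (k : ℕ) :
    polygonalPath w s (-u) k = -polygonalPath w s u k := by
  induction k with
  | zero => rfl
  | succ k ih =>
    rw [polygonalPath, polygonalPath, ih, hw, smul_neg]
    abel

theorem polygonalPath_eq_iterate {s : ℝ} {k : ℕ} (hk : k ≤ s) (u : H) :
    polygonalPath w s u k = (fun v => v - w v)^[k] u := by
  induction k with
  | zero => rfl
  | succ k ih =>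
    rw [Nat.cast_succ] at hk
    rw [polygonalPath, projIcc_of_right_le _ (by linarith), one_smul, ih (by linarith),
      iterate_succ_apply']

theorem polygonalPath_eq_of_le {s : ℝ} {k n : ℕ} (hk : s ≤ k) (hkn : k ≤ n) (u : H) :
    polygonalPath w s u n = polygonalPath w s u k := by
  induction n, hkn using Nat.le_induction with
  | base => rfl
  | succ n hkn ih =>
    have hsn : s - n ≤ 0 := sub_nonpos.2 (hk.trans (Nat.cast_le.2 hkn))
    rw [polygonalPath, projIcc_of_le_left _ hsn, zero_smul, sub_zero, ih]

theorem continuous_polygonalFlow (hw : Continuous w) :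
    Continuous fun p : ℝ × H => polygonalFlow w p.1 p.2 := by
  refine continuous_iff_continuousAt.2 fun p => ?_
  obtain ⟨n, hn⟩ := exists_nat_gt p.1
  refine (continuous_polygonalPath hw n).continuousAt.congr ?_
  filter_upwards [continuous_fst.continuousAt.eventually_lt_const hn] with q hq
  exact polygonalPath_eq_of_le (Nat.le_ceil _) (Nat.ceil_le.2 hq.le) q.2

theorem polygonalFlow_neg (hw : w.Odd) (s : ℝ) (u : H) :
    polygonalFlow w s (-u) = -polygonalFlow w s u :=
  polygonalPath_neg hw s u _

theorem apply_polygonalFlow_le_apply_iterate {f : H → ℝ}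
    (hdesc : ∀ u, ∀ τ ∈ Icc (0 : ℝ) 1, f (u - τ • w u) ≤ f u) {s : ℝ} {n : ℕ} (hn : n ≤ s)
    (u : H) : f (polygonalFlow w s u) ≤ f ((fun v => v - w v)^[n] u) := by
  have hanti : Antitone fun k => f (polygonalPath w s u k) :=
    antitone_nat_of_succ_le fun k => hdesc _ _ (Subtype.coe_prop _)
  rw [← polygonalPath_eq_iterate hn]
  exact hanti (Nat.cast_le.1 (hn.trans (Nat.le_ceil s)))

theorem exists_continuous_even_iterate_lt {X : Type*} [TopologicalSpace X] [NormalSpace X]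
    [ParacompactSpace X] [InvolutiveNeg X] [ContinuousNeg X] {T : X → X} (hT : Continuous T)
    {f : X → ℝ} (hf : Continuous f) {E : Set X} (hE : IsClosed E) {a : ℝ}
    (hEa : ∀ u ∈ E, ∃ n : ℕ, f (T^[n] u) < a) :
    ∃ N : X → ℝ, Continuous N ∧ N.Even ∧ ∀ u ∈ E, ∃ n : ℕ, n ≤ N u ∧ f (T^[n] u) < a := by
  obtain ⟨N, hN⟩ := exists_continuous_forall_mem_convex_of_local_const
    (t := fun u => {r : ℝ | u ∈ E → ∃ n : ℕ, n ≤ r ∧ f (T^[n] u) < a})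
    (fun u => OrdConnected.convex ⟨fun r hr _ _ s hs hu =>
      (hr hu).imp fun _ hn => ⟨hn.1.trans hs.1, hn.2⟩⟩)
    (fun u => by
      by_cases hu : u ∈ E
      · obtain ⟨n, hn⟩ := hEa u hu
        exact ⟨n, ((hf.comp (hT.iterate n)).continuousAt.eventually_lt_const hn).mono
          fun v hv _ => ⟨n, le_rfl, hv⟩⟩
      · exact ⟨0, (hE.isOpen_compl.eventually_mem hu).mono fun v hv hvE => absurd hvE hv⟩)
  refine ⟨fun u => max (N u) (N (-u)), by fun_prop, fun u => ?_, fun u hu => ?_⟩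
  · simp only [neg_neg, max_comm]
  · exact (hN u hu).imp fun n hn => ⟨hn.1.trans (le_max_left _ _), hn.2⟩

theorem exists_odd_deformation_of_iterate_lt {f : H → ℝ} (hf : Continuous f)
    (hw : Continuous w) (hwodd : w.Odd)
    (hdesc : ∀ u, ∀ τ ∈ Icc (0 : ℝ) 1, f (u - τ • w u) ≤ f u) {E : Set H} (hE : IsClosed E)
    {a : ℝ} (hEa : ∀ u ∈ E, ∃ n : ℕ, f ((fun v => v - w v)^[n] u) < a) :
    ∃ η : H → H, Continuous η ∧ η.Odd ∧ ∀ u ∈ E, f (η u) < a := by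
  obtain ⟨N, hN, hNeven, hNE⟩ :=
    exists_continuous_even_iterate_lt (continuous_id.sub hw) hf hE hEa
  refine ⟨fun u => polygonalFlow w (N u) u,
    (continuous_polygonalFlow hw).comp (hN.prodMk continuous_id),
    fun u => by simp only [hNeven u, polygonalFlow_neg hwodd], fun u hu => ?_⟩
  obtain ⟨n, hnN, hna⟩ := hNE u hu
  exact (apply_polygonalFlow_le_apply_iterate hdesc hnN u).trans_lt hna

end PolygonalFlow

section DescentField

/-- `ε = -1` gives odd selections, `ε = 1` even ones. -/
theorem exists_continuous_equivariant_forall_mem_convex {X F : Type*} [TopologicalSpace X]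
    [NormalSpace X] [ParacompactSpace X] [InvolutiveNeg X] [ContinuousNeg X] [AddCommGroup F]
    [TopologicalSpace F] [IsTopologicalAddGroup F] [Module ℝ F] [ContinuousSMul ℝ F]
    {ε : ℝ} (hε : ε * ε = 1) {t : X → Set F} (hconv : ∀ x, Convex ℝ (t x))
    (hsymm : ∀ x, ∀ v ∈ t x, ε • v ∈ t (-x)) (hloc : ∀ x, ∃ v, ∀ᶠ y in 𝓝 x, v ∈ t y) :
    ∃ g : X → F, Continuous g ∧ (∀ x, g (-x) = ε • g x) ∧ ∀ x, g x ∈ t x := by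
  obtain ⟨g, hg⟩ := exists_continuous_forall_mem_convex_of_local_const hconv hloc
  refine ⟨fun x => (1 / 2 : ℝ) • g x + (1 / 2 : ℝ) • ε • g (-x), by fun_prop, fun x => ?_,
    fun x => ?_⟩
  · simp only [neg_neg, smul_add, smul_comm ε, smul_smul ε ε, hε, one_smul]
    exact add_comm _ _
  · refine hconv x (hg x) ?_ (by norm_num) (by norm_num) (by norm_num)
    simpa only [neg_neg] using hsymm (-x) _ (hg (-x))

variable {H : Type*} [NormedAddCommGroup H] [NormedSpace ℝ H] {f : H → ℝ}

theorem odd_fderiv_of_even (heven : f.Even) : (fderiv ℝ f).Odd := fun u => by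
  have h := fderiv_comp_smul (f := f) (x := u) (-1 : ℝ)
  simp only [neg_smul, one_smul, heven _] at h
  rw [h, neg_neg]

theorem exists_pos_eventually_apply_sub_smul_le {L : H →L[ℝ] ℝ} {u : H}
    (hf : HasStrictFDerivAt f L u) {v : H → H} (hv : ContinuousAt v u) {κ : ℝ}
    (hκ : κ < L (v u)) :
    ∃ s > 0, ∀ᶠ x in 𝓝 u, ∀ σ ∈ Icc 0 s, f (x - σ • v x) ≤ f x - σ * κ := by
  obtain ⟨c, hc, hcκ⟩ : ∃ c > 0, κ < L (v u) - c * ‖v u‖ := by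
    have hlim : Tendsto (fun c : ℝ => L (v u) - c * ‖v u‖) (𝓝[>] 0) (𝓝 (L (v u))) :=
      tendsto_nhdsWithin_of_tendsto_nhds (Continuous.tendsto' (by fun_prop) _ _ (by simp))
    exact (eventually_mem_nhdsWithin.and (hlim.eventually_const_lt hκ)).exists
  have hcont : Tendsto (fun p : H × ℝ => (p.1 - p.2 • v p.1, p.1)) (𝓝 u ×ˢ 𝓝 0)
      (𝓝 (u, u)) := by
    have hv' : Tendsto (fun p : H × ℝ => p.2 • v p.1) (𝓝 u ×ˢ 𝓝 0) (𝓝 ((0 : ℝ) • v u)) :=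
      tendsto_snd.smul (hv.tendsto.comp tendsto_fst)
    simpa using (tendsto_fst.sub hv').prodMk_nhds tendsto_fst
  obtain ⟨P, hP, Q, hQ, hPQ⟩ := eventually_prod_iff.1 (hcont.eventually (hf.isLittleO.def hc))
  obtain ⟨s, hs, hsQ⟩ := Metric.nhds_basis_closedBall.eventually_iff.1 hQ
  have hκ' : ∀ᶠ x in 𝓝 u, κ < L (v x) - c * ‖v x‖ :=
    ((L.continuous.continuousAt.comp hv).sub (hv.norm.const_mul c)).eventually_const_lt hcκ
  refine ⟨s, hs, ?_⟩
  filter_upwards [hP, hκ'] with x hPx hκx σ hσ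
  have hσQ : Q σ := hsQ (by simpa [abs_of_nonneg hσ.1] using hσ.2)
  have hdiff := (le_abs_self _).trans (hPQ hPx hσQ)
  simp only [sub_sub_cancel_left, map_neg, map_smul, smul_eq_mul, sub_neg_eq_add, norm_neg,
    norm_smul, Real.norm_of_nonneg hσ.1] at hdiff
  nlinarith [mul_le_mul_of_nonneg_left hκx.le hσ.1]

theorem exists_norm_le_one_lt_apply {L : H →L[ℝ] ℝ} {κ : ℝ} (hκ : κ < ‖L‖) :
    ∃ v, ‖v‖ ≤ 1 ∧ κ < L v := by
  obtain ⟨v, hv, hκv⟩ := L.exists_lt_apply_of_lt_opNorm hκ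
  rcases lt_max_iff.1 hκv with h | h
  · exact ⟨v, hv.le, h⟩
  · exact ⟨-v, (norm_neg v).trans_le hv.le, by rwa [map_neg]⟩

theorem exists_odd_pseudoGradient (hf : ContDiff ℝ 1 f) (heven : f.Even) {κ δ : ℝ}
    (hκδ : κ < δ) :
    ∃ v : H → H, Continuous v ∧ v.Odd ∧
      ∀ u, ‖v u‖ ≤ 1 ∧ (δ ≤ ‖fderiv ℝ f u‖ → κ < fderiv ℝ f u (v u)) := by
  have hf' : Continuous (fderiv ℝ f) := hf.continuous_fderiv one_ne_zero
  let t : H → Set H := fun u => {v | ‖v‖ ≤ 1 ∧ (δ ≤ ‖fderiv ℝ f u‖ → κ < fderiv ℝ f u v)}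
  have hconv : ∀ u, Convex ℝ (t u) := by
    rintro u v₁ ⟨hv₁, hκv₁⟩ v₂ ⟨hv₂, hκv₂⟩ a b ha hb hab
    refine ⟨mem_closedBall_zero_iff.1 <| convex_closedBall (0 : H) 1
      (mem_closedBall_zero_iff.2 hv₁) (mem_closedBall_zero_iff.2 hv₂) ha hb hab, fun hu => ?_⟩
    exact convex_halfSpace_gt (fderiv ℝ f u).isLinear κ (hκv₁ hu) (hκv₂ hu) ha hb hab
  have hsymm : ∀ u, ∀ v ∈ t u, (-1 : ℝ) • v ∈ t (-u) := by
    rintro u v ⟨hv, hκv⟩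
    simpa [t, odd_fderiv_of_even heven u] using And.intro hv hκv
  have hloc : ∀ u, ∃ v, ∀ᶠ y in 𝓝 u, v ∈ t y := by
    intro u
    rcases le_or_gt δ ‖fderiv ℝ f u‖ with hu | hu
    · obtain ⟨v, hv, hκv⟩ := exists_norm_le_one_lt_apply (hκδ.trans_le hu)
      have hcont : Continuous fun y => fderiv ℝ f y v := hf'.clm_apply continuous_const
      exact ⟨v, (hcont.continuousAt.eventually_const_lt hκv).mono fun y hy => ⟨hv, fun _ => hy⟩⟩
    · exact ⟨0, (hf'.norm.continuousAt.eventually_lt_const hu).mono fun y hy =>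
        ⟨norm_zero.trans_le zero_le_one, fun h => absurd h hy.not_ge⟩⟩
  obtain ⟨v, hv, hvodd, hvt⟩ :=
    exists_continuous_equivariant_forall_mem_convex (by norm_num) hconv hsymm hloc
  exact ⟨v, hv, fun u => by rw [hvodd, neg_one_smul], hvt⟩

theorem exists_even_stepSize (hf : ContDiff ℝ 1 f) (heven : f.Even) {κ δ : ℝ} {v : H → H}
    (hv : Continuous v) (hvodd : v.Odd)
    (hκv : ∀ u, δ ≤ ‖fderiv ℝ f u‖ → κ < fderiv ℝ f u (v u)) :
    ∃ s : H → ℝ, Continuous s ∧ s.Even ∧ ∀ u, 0 ≤ s u ∧ (δ ≤ ‖fderiv ℝ f u‖ → 0 < s u) ∧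
      ∀ σ ∈ Icc 0 (s u), f (u - σ • v u) ≤ f u - σ * κ := by
  let t : H → Set ℝ := fun u => {s | 0 ≤ s ∧ (δ ≤ ‖fderiv ℝ f u‖ → 0 < s) ∧
    ∀ σ ∈ Icc 0 s, f (u - σ • v u) ≤ f u - σ * κ}
  have hconv : ∀ u, Convex ℝ (t u) := by
    refine fun u => OrdConnected.convex ⟨?_⟩
    rintro r ⟨hr, hrpos, -⟩ r' ⟨-, -, hr'⟩ s ⟨hrs, hsr'⟩
    exact ⟨hr.trans hrs, fun hu => (hrpos hu).trans_le hrs,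
      fun σ hσ => hr' σ ⟨hσ.1, hσ.2.trans hsr'⟩⟩
  have hsymm : ∀ u, ∀ s ∈ t u, (1 : ℝ) • s ∈ t (-u) := by
    rintro u s ⟨hs, hspos, hsdesc⟩
    rw [one_smul]
    refine ⟨hs, fun hu => hspos ?_, fun σ hσ => ?_⟩
    · rwa [odd_fderiv_of_even heven u, norm_neg] at hu
    · have hneg : -u - σ • v (-u) = -(u - σ • v u) := by
        rw [hvodd, smul_neg]
        abel
      rw [hneg, heven, heven]
      exact hsdesc σ hσ
  have hloc : ∀ u, ∃ s, ∀ᶠ y in 𝓝 u, s ∈ t y := by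
    intro u
    rcases le_or_gt δ ‖fderiv ℝ f u‖ with hu | hu
    · obtain ⟨s, hs, hdesc⟩ := exists_pos_eventually_apply_sub_smul_le
        (hf.contDiffAt.hasStrictFDerivAt one_ne_zero) hv.continuousAt (hκv u hu)
      exact ⟨s, hdesc.mono fun x hx => ⟨hs.le, fun _ => hs, hx⟩⟩
    · have hf' : Continuous (fderiv ℝ f) := hf.continuous_fderiv one_ne_zero
      refine ⟨0, (hf'.norm.continuousAt.eventually_lt_const hu).mono fun y hy =>
        ⟨le_rfl, fun h => absurd h hy.not_ge, fun σ hσ => ?_⟩⟩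
      simp [le_antisymm hσ.2 hσ.1]
  obtain ⟨s, hs, hseven, hst⟩ :=
    exists_continuous_equivariant_forall_mem_convex (one_mul 1) hconv hsymm hloc
  exact ⟨s, hs, fun u => by rw [hseven, one_smul], hst⟩

theorem exists_odd_descentField (hf : ContDiff ℝ 1 f) (heven : f.Even) {κ δ : ℝ} (hκ : 0 ≤ κ)
    (hκδ : κ < δ) :
    ∃ w : H → H, Continuous w ∧ w.Odd ∧ (∀ u, w u = 0 → ‖fderiv ℝ f u‖ < δ) ∧
      ∀ u, ∀ τ ∈ Icc (0 : ℝ) 1, f (u - τ • w u) ≤ f u - τ * (κ * ‖w u‖) := by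
  obtain ⟨v, hv, hvodd, hvκ⟩ := exists_odd_pseudoGradient hf heven hκδ
  obtain ⟨s, hs, hseven, hsdesc⟩ := exists_even_stepSize hf heven hv hvodd fun u => (hvκ u).2
  refine ⟨fun u => s u • v u, hs.smul hv, fun u => by simp only [hseven u, hvodd u, smul_neg],
    fun u hu => lt_of_not_ge fun hδu => ?_, fun u τ hτ => ?_⟩
  · have hv0 : v u = 0 := (smul_eq_zero.1 hu).resolve_left ((hsdesc u).2.1 hδu).ne'
    have hlt := (hvκ u).2 hδu
    rw [hv0, map_zero] at hlt
    exact hlt.not_ge hκ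
  · have hs0 : 0 ≤ s u := (hsdesc u).1
    calc f (u - τ • s u • v u) ≤ f u - τ * s u * κ := by
          rw [smul_smul]
          exact (hsdesc u).2.2 _ ⟨mul_nonneg hτ.1 hs0, mul_le_of_le_one_left hs0 hτ.2⟩
      _ ≤ f u - τ * (κ * ‖s u • v u‖) := by
          have hnorm : ‖s u • v u‖ ≤ s u := by
            rw [norm_smul, Real.norm_of_nonneg hs0]
            exact mul_le_of_le_one_right hs0 (hvκ u).1
          rw [mul_assoc, mul_comm (s u)]
          gcongr
          exact hτ.1

end DescentField

section PalaisSmale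

variable {H : Type*} [NormedAddCommGroup H] [NormedSpace ℝ H] {f : H → ℝ} {c : ℝ}

/-- The Palais–Smale condition at the level `c`: a sequence along which `f` tends to `c` and its
derivative tends to zero has a convergent subsequence. -/
def PalaisSmaleAt (f : H → ℝ) (c : ℝ) : Prop :=
  ∀ u : ℕ → H, Tendsto (fun j => f (u j)) atTop (𝓝 c) →
    Tendsto (fun j => ‖fderiv ℝ f (u j)‖) atTop (𝓝 0) →
    ∃ (φ : ℕ → ℕ) (x : H), StrictMono φ ∧ Tendsto (fun i => u (φ i)) atTop (𝓝 x)

theorem palaisSmaleAt_of_forall_bounded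
    (hPS : ∀ u : ℕ → H, (∃ M : ℝ, ∀ j, |f (u j)| ≤ M) →
      Tendsto (fun j => ‖fderiv ℝ f (u j)‖) atTop (𝓝 0) →
      ∃ (φ : ℕ → ℕ) (x : H), StrictMono φ ∧ Tendsto (fun i => u (φ i)) atTop (𝓝 x)) :
    PalaisSmaleAt f c := fun u hu =>
  hPS u <| (isBounded_iff_forall_norm_le.1 (Metric.isBounded_range_of_tendsto _ hu)).imp
    fun _ hM j => hM _ (mem_range_self j)

theorem PalaisSmaleAt.exists_le_norm_fderiv (hPS : PalaisSmaleAt f c) (hf : ContDiff ℝ 1 f)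
    {Z : Set H} (hZ : IsClosed Z) (hZc : ∀ u ∈ Z, fderiv ℝ f u = 0 → f u ≠ c) :
    ∃ δ > 0, ∀ u ∈ Z, ∀ z, dist u z ≤ δ → |f z - c| ≤ δ → δ ≤ ‖fderiv ℝ f z‖ := by
  by_contra! hcon
  choose u huZ z huz hzc hz using fun n : ℕ => hcon (1 / ((n : ℝ) + 1)) Nat.one_div_pos_of_nat
  have hlim := tendsto_one_div_add_atTop_nhds_zero_nat (𝕜 := ℝ)
  have hfz : Tendsto (fun n => f (z n)) atTop (𝓝 c) :=
    tendsto_iff_dist_tendsto_zero.2 (squeeze_zero (fun _ => dist_nonneg) hzc hlim)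
  have hf'z : Tendsto (fun n => ‖fderiv ℝ f (z n)‖) atTop (𝓝 0) :=
    squeeze_zero (fun _ => norm_nonneg _) (fun n => (hz n).le) hlim
  obtain ⟨φ, x, hφ, hzx⟩ := hPS z hfz hf'z
  have huz0 : Tendsto (fun i => dist (u (φ i)) (z (φ i))) atTop (𝓝 0) :=
    (squeeze_zero (fun _ => dist_nonneg) huz hlim).comp hφ.tendsto_atTop
  have hux : Tendsto (fun i => u (φ i)) atTop (𝓝 x) := (tendsto_iff_of_dist huz0).2 hzx
  have hf' : Continuous fun y => ‖fderiv ℝ f y‖ := (hf.continuous_fderiv one_ne_zero).norm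
  have hfderiv0 : ‖fderiv ℝ f x‖ = 0 :=
    tendsto_nhds_unique ((hf'.tendsto x).comp hzx) (hf'z.comp hφ.tendsto_atTop)
  have hfx : f x = c :=
    tendsto_nhds_unique ((hf.continuous.tendsto x).comp hzx) (hfz.comp hφ.tendsto_atTop)
  exact hZc x (hZ.mem_of_tendsto hux (Eventually.of_forall fun _ => huZ _))
    (norm_eq_zero.1 hfderiv0) hfx

theorem PalaisSmaleAt.exists_odd_deformation [CompleteSpace H] (hPS : PalaisSmaleAt f c)
    (hf : ContDiff ℝ 1 f) (heven : f.Even) {Z : Set H} (hZ : IsClosed Z)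
    (hZc : ∀ u ∈ Z, fderiv ℝ f u = 0 → f u ≠ c) :
    ∃ ε > 0, ∃ η : H → H, Continuous η ∧ η.Odd ∧
      ∀ u ∈ Z, f u ≤ c + ε → f (η u) ≤ c - ε := by
  obtain ⟨δ, hδ, hslope⟩ := hPS.exists_le_norm_fderiv hf hZ hZc
  obtain ⟨w, hw, hwodd, hw0, hdesc⟩ :=
    exists_odd_descentField hf heven (half_pos hδ).le (half_lt_self hδ)
  have hdesc_le : ∀ u, ∀ τ ∈ Icc (0 : ℝ) 1, f (u - τ • w u) ≤ f u := fun u τ hτ =>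
    (hdesc u τ hτ).trans (sub_le_self _ (mul_nonneg hτ.1 (by positivity)))
  have hstep : ∀ u, δ / 2 * dist u (u - w u) ≤ f u - f (u - w u) := fun u => by
    have h := hdesc u 1 (right_mem_Icc.2 zero_le_one)
    rw [one_smul, one_mul] at h
    rw [dist_self_sub_right]
    linarith
  -- An orbit along which `f` drops by at most `2 * ε` has length at most `2 * ε / (δ / 2) ≤ δ`.
  obtain ⟨ε, hε, hεδ, hεδ'⟩ : ∃ ε > 0, ε ≤ δ ∧ 2 * ε ≤ δ / 2 * δ :=
    ⟨min δ (δ / 2 * δ / 2), by positivity, min_le_left _ _, by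
      linarith [min_le_right δ (δ / 2 * δ / 2)]⟩
  have hreach : ∀ u ∈ Z ∩ {u | f u ≤ c + ε}, ∃ n : ℕ, f ((fun v => v - w v)^[n] u) < c - ε := by
    rintro u ⟨huZ, huc : f u ≤ c + ε⟩
    by_contra! hstay
    obtain ⟨y, hy, huy, hyc⟩ := exists_isFixedPt_of_mul_dist_le_sub (continuous_id.sub hw)
      hf.continuous (half_pos hδ) hstep hstay
    have hdist : dist u y ≤ δ := le_of_mul_le_mul_left (by linarith) (half_pos hδ)
    have hlevel : |f y - c| ≤ δ := by
      have : 0 ≤ δ / 2 * dist u y := by positivity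
      exact abs_le.2 ⟨by linarith, by linarith⟩
    exact (hslope u huZ y hdist hlevel).not_gt (hw0 y (sub_eq_self.1 hy))
  obtain ⟨η, hη, hηodd, hηE⟩ := exists_odd_deformation_of_iterate_lt hf.continuous hw hwodd
    hdesc_le (hZ.inter (isClosed_le hf.continuous continuous_const)) hreach
  exact ⟨ε, hε, η, hη, hηodd, fun u huZ huc => (hηE u ⟨huZ, huc⟩).le⟩

theorem PalaisSmaleAt.exists_genus_sublevel_le_add_finrank [CompleteSpace H]
    (hPS : PalaisSmaleAt f c) (hf : ContDiff ℝ 1 f) (heven : f.Even) {V : Type*}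
    [NormedAddCommGroup V] [NormedSpace ℝ V] [FiniteDimensional ℝ V] {g : H → V}
    (hg : Continuous g) (hgodd : g.Odd) (hgc : ∀ u, g u = 0 → fderiv ℝ f u = 0 → f u ≠ c) :
    ∃ ε > 0, genus {u | f u ≤ c + ε} ≤ genus {u | f u ≤ c - ε} + Module.finrank ℝ V := by
  obtain ⟨ε, hε, η, hη, hηodd, hηZ⟩ :=
    hPS.exists_odd_deformation hf heven (isClosed_eq hg continuous_const) hgc
  exact ⟨ε, hε, genus_le_genus_add_finrank hη hηodd hg hgodd fun u hu hgu => hηZ u hgu hu⟩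

end PalaisSmale

section CriticalPairs

variable {H : Type*} [NormedAddCommGroup H] [NormedSpace ℝ H] {f : H → ℝ} {I J : Set ℝ}

/-- The set of pairs `{u, -u}` of critical points of `f` with critical value in `I`, each pair
encoded as a subset of `H`. -/
def criticalPairs (f : H → ℝ) (I : Set ℝ) : Set (Set H) :=
  {p | ∃ u : H, fderiv ℝ f u = 0 ∧ f u ∈ I ∧ p = {u, -u}}

theorem criticalPairs_mono (h : I ⊆ J) : criticalPairs f I ⊆ criticalPairs f J :=
  fun _ ⟨u, hu, huI, hp⟩ => ⟨u, hu, h huI, hp⟩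

theorem disjoint_criticalPairs (heven : f.Even) (h : Disjoint I J) :
    Disjoint (criticalPairs f I) (criticalPairs f J) := by
  refine Set.disjoint_left.2 ?_
  rintro _ ⟨u, -, huI, rfl⟩ ⟨v, -, hvJ, hp⟩
  have hfu : f u = f v := by
    rcases hp ▸ mem_insert u {-u} with rfl | rfl
    · rfl
    · exact heven v
  exact Set.disjoint_left.1 h huI (hfu ▸ hvJ)

theorem encard_criticalPairs_add_le (heven : f.Even) {K : Set ℝ} (hIJ : Disjoint I J)
    (hK : I ∪ J ⊆ K) :
    (criticalPairs f I).encard + (criticalPairs f J).encard ≤ (criticalPairs f K).encard := by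
  rw [← encard_union_eq (disjoint_criticalPairs heven hIJ)]
  exact encard_le_encard (union_subset (criticalPairs_mono (subset_union_left.trans hK))
    (criticalPairs_mono (subset_union_right.trans hK)))

theorem finite_criticalPoints_of_finite_criticalPairs (h : (criticalPairs f I).Finite) :
    {u | fderiv ℝ f u = 0 ∧ f u ∈ I}.Finite := by
  refine (h.sUnion ?_).subset fun u hu => ⟨{u, -u}, ⟨u, hu.1, hu.2, rfl⟩, mem_insert _ _⟩
  rintro _ ⟨u, -, -, rfl⟩
  exact toFinite _

end CriticalPairs

theorem exists_dual_forall_apply_ne_zero {V : Type*} [AddCommGroup V] [TopologicalSpace V]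
    [Module ℝ V] [SeparatingDual ℝ V] {K : Set V} (hK : K.Finite)
    (h0 : (0 : V) ∉ K) : ∃ ℓ : StrongDual ℝ V, ∀ u ∈ K, ℓ u ≠ 0 := by
  have := hK.to_subtype
  obtain ⟨ℓ, hℓ⟩ := Module.Dual.exists_forall_ne_zero_of_forall_exists
    (fun u : K => (topDualPairing ℝ V).flip u) fun u =>
      SeparatingDual.exists_ne_zero (ne_of_mem_of_not_mem u.2 h0)
  exact ⟨ℓ, fun u hu => hℓ ⟨u, hu⟩⟩

theorem PalaisSmaleAt.exists_genus_sublevel_le_add_encard {H : Type*} [NormedAddCommGroup H]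
    [NormedSpace ℝ H] [CompleteSpace H] {f : H → ℝ} {c : ℝ} (hPS : PalaisSmaleAt f c)
    (hf : ContDiff ℝ 1 f) (heven : f.Even) (hc : c < f 0) :
    ∃ ε > 0, genus {u | f u ≤ c + ε} ≤
      genus {u | f u ≤ c - ε} + (criticalPairs f {c}).encard := by
  rcases (criticalPairs f {c}).finite_or_infinite with hfin | hinf
  · rcases (criticalPairs f {c}).eq_empty_or_nonempty with hempty | hne
    · have hreg : ∀ u, fderiv ℝ f u = 0 → f u ≠ c := fun u hu huc =>
        hempty.subset ⟨u, hu, huc, rfl⟩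
      obtain ⟨ε, hε, hle⟩ := hPS.exists_genus_sublevel_le_add_finrank hf heven
        (g := fun _ => (0 : Fin 0 → ℝ)) continuous_const Odd.zero fun u _ => hreg u
      exact ⟨ε, hε, by simpa [hempty] using hle⟩
    · obtain ⟨ℓ, hℓ⟩ := exists_dual_forall_apply_ne_zero
        (finite_criticalPoints_of_finite_criticalPairs hfin) fun h => hc.ne' h.2
      obtain ⟨ε, hε, hle⟩ := hPS.exists_genus_sublevel_le_add_finrank hf heven ℓ.continuous
        (map_neg ℓ) fun u hℓu hu huc => hℓ u ⟨hu, huc⟩ hℓu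
      refine ⟨ε, hε, hle.trans ?_⟩
      rw [Module.finrank_self, Nat.cast_one]
      gcongr
      exact one_le_encard_iff_nonempty.2 hne
  · exact ⟨1, one_pos, by simp [hinf.encard_eq]⟩

theorem forall_le_of_forall_lt_imp_forall_Icc {α : Type*} [ConditionallyCompleteLinearOrder α]
    {P : α → Prop} {a b : α} (hbot : ∀ s < a, P s)
    (hstep : ∀ t ∈ Icc a b, (∀ s < t, P s) → ∃ r > t, ∀ s ∈ Icc t r, P s) :
    ∀ s ≤ b, P s := by
  by_contra! ⟨s, hsb, hs⟩
  have hlower : a ∈ lowerBounds {s | ¬P s} := fun s hs => not_lt.1 fun hsa => hs (hbot s hsa)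
  set t := sInf {s | ¬P s}
  have hbelow : ∀ s < t, P s := fun s hst => not_not.1 (notMem_of_lt_csInf hst ⟨a, hlower⟩)
  have htb : t ≤ b := (csInf_le ⟨a, hlower⟩ hs).trans hsb
  obtain ⟨r, htr, hr⟩ := hstep t ⟨le_csInf ⟨s, hs⟩ hlower, htb⟩ hbelow
  obtain ⟨q, hq, hqr⟩ := exists_lt_of_csInf_lt ⟨s, hs⟩ htr
  exact hq (hr q ⟨csInf_le ⟨a, hlower⟩ hq, hqr.le⟩)

theorem genus_of_sublevel_sets_general {H : Type*} [NormedAddCommGroup H] [NormedSpace ℝ H]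
    [CompleteSpace H] {f : H → ℝ} (hf : ContDiff ℝ 1 f) (heven : f.Even) {c₁ c₂ : ℝ}
    (hPS : ∀ c ∈ Icc c₁ c₂, PalaisSmaleAt f c) (h20 : c₂ < f 0) :
    genus {u | f u ≤ c₂} ≤
      genus {u | f u ≤ c₁} + (criticalPairs f (Icc c₁ c₂)).encard := by
  have hmono : ∀ {s t : ℝ}, s ≤ t → genus {u | f u ≤ s} ≤ genus {u | f u ≤ t} :=
    fun h => genus_mono fun _ hu => hu.trans h
  refine forall_le_of_forall_lt_imp_forall_Icc (a := c₁)
    (P := fun t => genus {u | f u ≤ t} ≤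
      genus {u | f u ≤ c₁} + (criticalPairs f (Icc c₁ t)).encard)
    (fun s hs => (hmono hs.le).trans le_self_add) (fun t ht hbelow => ?_) c₂ le_rfl
  obtain ⟨ε, hε, hcross⟩ :=
    (hPS t ht).exists_genus_sublevel_le_add_encard hf heven (ht.2.trans_lt h20)
  refine ⟨t + ε, by linarith, fun s hs => ?_⟩
  have hdisj : Disjoint (Icc c₁ (t - ε)) {t} :=
    Set.disjoint_singleton_right.2 fun h => by linarith [h.2]
  have hunion : Icc c₁ (t - ε) ∪ {t} ⊆ Icc c₁ s :=
    union_subset (Icc_subset_Icc_right (by linarith [hs.1]))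
      (singleton_subset_iff.2 ⟨ht.1, hs.1⟩)
  calc genus {u | f u ≤ s} ≤ genus {u | f u ≤ t + ε} := hmono hs.2
    _ ≤ genus {u | f u ≤ t - ε} + (criticalPairs f {t}).encard := hcross
    _ ≤ genus {u | f u ≤ c₁} + (criticalPairs f (Icc c₁ (t - ε))).encard +
          (criticalPairs f {t}).encard := by
        gcongr
        exact hbelow (t - ε) (by linarith)
    _ ≤ genus {u | f u ≤ c₁} + (criticalPairs f (Icc c₁ s)).encard := by
        rw [add_assoc]
        gcongr
        exact encard_criticalPairs_add_le heven hdisj hunion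

/-- for an even `C²` functional `f` on a real Hilbert space satisfying the
Palais–Smale condition, and `c₁ ≤ c₂ < f(0)`, the genus of the sublevel set `f^{c₂}` exceeds
that of `f^{c₁}` by at most the number of pairs `{−u,u}` of critical points of `f` with
critical values in `[c₁, c₂]`. -/
theorem genus_of_sublevel_sets {H : Type*} [NormedAddCommGroup H] [InnerProductSpace ℝ H]
    [CompleteSpace H]
    (f : H → ℝ) (hf : ContDiff ℝ 2 f) (heven : ∀ u, f (-u) = f u)
    (hPS : ∀ u : ℕ → H, (∃ M : ℝ, ∀ j, |f (u j)| ≤ M) →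
      Filter.Tendsto (fun j => ‖fderiv ℝ f (u j)‖) Filter.atTop (nhds 0) →
      ∃ (φ : ℕ → ℕ) (x : H), StrictMono φ ∧
        Filter.Tendsto (fun i => u (φ i)) Filter.atTop (nhds x))
    (c₁ c₂ : ℝ) (h12 : c₁ ≤ c₂) (h20 : c₂ < f 0) :
    genus {u : H | f u ≤ c₂}
      ≤ genus {u : H | f u ≤ c₁}
        + {p : Set H | ∃ u : H, fderiv ℝ f u = 0 ∧ c₁ ≤ f u ∧ f u ≤ c₂ ∧ p = {u, -u}}.encard := by
  simpa only [criticalPairs, mem_Icc, and_assoc] using genus_of_sublevel_sets_general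
    (hf.of_le one_le_two) heven (fun _ _ => palaisSmaleAt_of_forall_bounded hPS) h20
end
end
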